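/- For every δ > 0 and R₀ > 0 there exists C > 0, independent of the data, of u and of t, such that the following holds. For every classical solution u of the damped wave equation of class C³(closure(Ω)×[0,∞)) with finite propagation from B(0,R₀) and with ‖(u(·,0), u_t(·,0))‖_{H²×H¹} < ∞, one has for all t ≥ 0: ( ∫_Ω a(x) |u(x,t)|² dx )^{1/2} ≤ C (1+t)^{−(N+α)/(2(2+α)) + δ} ‖(u(·,0), u_t(·,0))‖_{H²×H¹}. Moreover, when N = 2 the same estimate holds with δ = 0. -/

import Mathlib

open MeasureTheory Filter

noncomputable section

/-- The Laplacian `Δφ = ∑ᵢ ∂²φ/∂xᵢ²`. -/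
def lap {N : ℕ} (φ : EuclideanSpace ℝ (Fin N) → ℝ) (x : EuclideanSpace ℝ (Fin N)) : ℝ :=
  ∑ i : Fin N, fderiv ℝ (fun z => fderiv ℝ φ z (EuclideanSpace.single i 1)) x
    (EuclideanSpace.single i 1)

/-- `Ω` has a smooth boundary: near every boundary point, `Ω` is the sublevel set of a
smooth local defining function with nonvanishing differential. -/
def HasSmoothBoundary {N : ℕ} (Ω : Set (EuclideanSpace ℝ (Fin N))) : Prop :=
  ∀ x ∈ frontier Ω, ∃ (U : Set (EuclideanSpace ℝ (Fin N)))
    (f : EuclideanSpace ℝ (Fin N) → ℝ),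
    IsOpen U ∧ x ∈ U ∧ ContDiff ℝ (⊤ : ℕ∞) f ∧ fderiv ℝ f x ≠ 0 ∧
      ∀ y ∈ U, (y ∈ Ω ↔ f y < 0)

/-- A classical solution of class `C^k` of the damped wave equation
`u_tt − Δu + a u_t = 0` on `Ω × (0,∞)`, with Dirichlet boundary condition, whose data are
supported in `B(0,R₀)` and which has finite propagation speed. -/
def IsDampedWaveSolution {N : ℕ} (k : ℕ) (Ω : Set (EuclideanSpace ℝ (Fin N)))
    (a : EuclideanSpace ℝ (Fin N) → ℝ) (R₀ : ℝ)
    (u : EuclideanSpace ℝ (Fin N) → ℝ → ℝ) : Prop :=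
  ContDiff ℝ k (Function.uncurry u) ∧
  (∀ x ∈ Ω, ∀ t > (0 : ℝ),
    deriv (deriv (u x)) t - lap (fun y => u y t) x + a x * deriv (u x) t = 0) ∧
  (∀ x ∈ frontier Ω, ∀ t > (0 : ℝ), u x t = 0) ∧
  tsupport (fun x => u x 0) ⊆ Metric.ball (0 : EuclideanSpace ℝ (Fin N)) R₀ ∧
  tsupport (fun x => deriv (u x) 0) ⊆ Metric.ball (0 : EuclideanSpace ℝ (Fin N)) R₀ ∧
  (∀ t ≥ (0 : ℝ), tsupport (fun x => u x t)
    ⊆ Metric.closedBall (0 : EuclideanSpace ℝ (Fin N)) (R₀ + t))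

/-- The squared Sobolev `H^m(Ω)` norm `∑_{j ≤ m} ∫_Ω |∂^j f|² dx`. -/
def sobNormSq {N : ℕ} (m : ℕ) (Ω : Set (EuclideanSpace ℝ (Fin N)))
    (f : EuclideanSpace ℝ (Fin N) → ℝ) : ℝ :=
  ∑ j ∈ Finset.range (m + 1), ∫ x in Ω, ‖iteratedFDeriv ℝ j f x‖ ^ 2

/-!
For a weight `Ψ = (t₀ + t)^λ exp(B / (t₀ + t))` consider the energy
`∫ Ψ (K (uₜ² + |∇u|²) + 2 u uₜ + a u²)`. The conditions `ΔB ≥ (λ + κ) a` and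
`|∇B|² ≤ (1 - κ) a B` make it nonincreasing once `K` and `t₀` are large, hence
`∫ a u² = O((1 + t)^(-λ))`. Since `a ∼ a₀ |x|^α` at infinity, a radial `B` growing like
`|x|^(2 + α)` meets both conditions for every `λ < (N + α) / (2 + α)`.

For `λ = 1` the choice `B = 0` leaves an error controlled by `∫∫ a u²`. The time primitive
`v = ∫₀ᵗ u` solves `vₜₜ - Δv + a vₜ = uₜ(0) + a u(0)`, so its energy inequality bounds exactly
`∫∫ a u²`; the source term is absorbed into `∫ |∇v|²` by a Poincaré inequality with Gaussian weight,
which holds because `Ω` stays away from the origin. When `N = 2` the exponent is the endpoint one.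
-/

section SpaceTimeCalculus

variable {N : ℕ} {w : EuclideanSpace ℝ (Fin N) → ℝ → ℝ}

/-- The partial derivative `∂w/∂xᵢ` of a function of space and time. -/
def dx (w : EuclideanSpace ℝ (Fin N) → ℝ → ℝ) (i : Fin N) (x : EuclideanSpace ℝ (Fin N))
    (t : ℝ) : ℝ :=
  fderiv ℝ (fun y => w y t) x (EuclideanSpace.single i 1)

/-- The time derivative `∂w/∂t` of a function of space and time. -/
def dt (w : EuclideanSpace ℝ (Fin N) → ℝ → ℝ) (x : EuclideanSpace ℝ (Fin N)) (t : ℝ) : ℝ :=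
  deriv (w x) t

lemma contDiff_slice {n : WithTop ℕ∞} (h : ContDiff ℝ n (Function.uncurry w)) (t : ℝ) :
    ContDiff ℝ n (fun y => w y t) :=
  h.comp (contDiff_id.prodMk contDiff_const)

lemma contDiff_dx {n m : WithTop ℕ∞} (h : ContDiff ℝ n (Function.uncurry w)) (hm : m + 1 ≤ n)
    (i : Fin N) : ContDiff ℝ m (Function.uncurry (dx w i)) := by
  have hw : ContDiff ℝ n (Function.uncurry
      fun (p : EuclideanSpace ℝ (Fin N) × ℝ) (y : EuclideanSpace ℝ (Fin N)) => w y p.2) :=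
    h.comp (contDiff_snd.prodMk (contDiff_snd.comp contDiff_fst))
  exact ContDiff.fderiv_apply (m := n) hw contDiff_fst contDiff_const hm

lemma contDiff_dt {n m : WithTop ℕ∞} (h : ContDiff ℝ n (Function.uncurry w)) (hm : m + 1 ≤ n) :
    ContDiff ℝ m (Function.uncurry (dt w)) := by
  have hw : ContDiff ℝ n (Function.uncurry
      fun (p : EuclideanSpace ℝ (Fin N) × ℝ) (s : ℝ) => w p.1 s) :=
    h.comp ((contDiff_fst.comp contDiff_fst).prodMk contDiff_snd)
  exact ContDiff.fderiv_apply (m := n) hw contDiff_snd contDiff_const hm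

lemma hasDerivAt_dt (h : ContDiff ℝ 1 (Function.uncurry w)) (x : EuclideanSpace ℝ (Fin N))
    (t : ℝ) : HasDerivAt (w x) (dt w x t) t :=
  ((h.comp (contDiff_const.prodMk contDiff_id)).differentiable one_ne_zero t).hasDerivAt

lemma hasLineDerivAt_dx (h : ContDiff ℝ 1 (Function.uncurry w)) (i : Fin N)
    (x : EuclideanSpace ℝ (Fin N)) (t : ℝ) :
    HasLineDerivAt ℝ (fun y => w y t) (dx w i x t) x (EuclideanSpace.single i 1) :=
  ((contDiff_slice h t).differentiable one_ne_zero x).hasFDerivAt.hasLineDerivAt _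

lemma dx_eq_fderiv (h : ContDiff ℝ 1 (Function.uncurry w)) (i : Fin N)
    (x : EuclideanSpace ℝ (Fin N)) (t : ℝ) :
    dx w i x t = fderiv ℝ (Function.uncurry w) (x, t) (EuclideanSpace.single i 1, 0) := by
  have hw := (h.differentiable one_ne_zero (x, t)).hasFDerivAt
  have hslice := hw.comp x ((hasFDerivAt_id (𝕜 := ℝ) x).prodMk (hasFDerivAt_const t x))
  rw [dx, show fderiv ℝ (fun y => w y t) x = _ from hslice.fderiv]
  simp

lemma dt_eq_fderiv (h : ContDiff ℝ 1 (Function.uncurry w)) (x : EuclideanSpace ℝ (Fin N))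
    (t : ℝ) : dt w x t = fderiv ℝ (Function.uncurry w) (x, t) (0, 1) := by
  have hw := (h.differentiable one_ne_zero (x, t)).hasFDerivAt
  exact (hw.comp_hasDerivAt t ((hasDerivAt_const t x).prodMk (hasDerivAt_id t))).deriv

lemma dt_dx_comm (h : ContDiff ℝ 2 (Function.uncurry w)) (i : Fin N)
    (x : EuclideanSpace ℝ (Fin N)) (t : ℝ) : dt (dx w i) x t = dx (dt w) i x t := by
  have h1 : ContDiff ℝ 1 (Function.uncurry w) := h.of_le one_le_two
  have hdx : Function.uncurry (dx w i) = fun p => fderiv ℝ (Function.uncurry w) p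
      (EuclideanSpace.single i 1, 0) := funext fun p => dx_eq_fderiv h1 i p.1 p.2
  have hdt : Function.uncurry (dt w) = fun p => fderiv ℝ (Function.uncurry w) p (0, 1) :=
    funext fun p => dt_eq_fderiv h1 p.1 p.2
  have hdiff : DifferentiableAt ℝ (fderiv ℝ (Function.uncurry w)) (x, t) :=
    (h.fderiv_right (m := 1) one_add_one_eq_two.le).differentiable one_ne_zero _
  rw [dt_eq_fderiv (contDiff_dx h one_add_one_eq_two.le i),
    dx_eq_fderiv (contDiff_dt h one_add_one_eq_two.le), hdx, hdt,
    fderiv_clm_apply hdiff (by fun_prop), fderiv_clm_apply hdiff (by fun_prop)]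
  simpa using (h.contDiffAt.isSymmSndFDerivAt (by simp)) _ _

lemma dx_eq_zero_of_eventuallyEq {i : Fin N} {x : EuclideanSpace ℝ (Fin N)} {t : ℝ}
    (h : (fun y => w y t) =ᶠ[nhds x] 0) : dx w i x t = 0 := by
  simp [dx, h.fderiv_eq]

lemma sq_fderiv_eq_sum_sq_dx (x : EuclideanSpace ℝ (Fin N)) (t : ℝ) :
    ‖fderiv ℝ (fun y => w y t) x‖ ^ 2 = ∑ i, dx w i x t ^ 2 := by
  set ℓ := fderiv ℝ (fun y => w y t) x
  have hcoord (i : Fin N) : dx w i x t = (InnerProductSpace.toDual ℝ _).symm ℓ i := by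
    have h := InnerProductSpace.toDual_symm_apply (𝕜 := ℝ) (x := EuclideanSpace.single i 1) (y := ℓ)
    rw [EuclideanSpace.inner_single_right] at h
    simpa [dx, ℓ] using h.symm
  rw [← (InnerProductSpace.toDual ℝ _).symm.norm_map ℓ, EuclideanSpace.norm_sq_eq]
  simp [hcoord]

end SpaceTimeCalculus

section ParametricIntegral

universe u

variable {H : Type u} [NormedAddCommGroup H] [NormedSpace ℝ H] [LocallyCompactSpace H]
  {G : Type u} [NormedAddCommGroup G] [NormedSpace ℝ G]

lemma hasFDerivAt_intervalIntegral_of_contDiff {f : H → ℝ → G}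
    (hf : ContDiff ℝ 1 (Function.uncurry f)) (a b : ℝ) (z : H) :
    HasFDerivAt (fun z => ∫ s in a..b, f z s) (∫ s in a..b, fderiv ℝ (fun y => f y s) z) z := by
  have hf' : Continuous (Function.uncurry fun z s => fderiv ℝ (fun y => f y s) z) :=
    (ContDiff.fderiv (f := fun (p : H × ℝ) (y : H) => f y p.2) (m := 1) (n := 0)
      (hf.comp (contDiff_snd.prodMk (contDiff_snd.comp contDiff_fst))) contDiff_fst
      (by simp)).continuous
  obtain ⟨K, hK, hKz⟩ := exists_compact_mem_nhds z
  obtain ⟨C, hC⟩ := (hK.prod (isCompact_uIcc (a := a) (b := b))).exists_bound_of_continuousOn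
    hf'.continuousOn
  refine intervalIntegral.hasFDerivAt_integral_of_dominated_of_fderiv_le (𝕜 := ℝ)
    (F' := fun z s => fderiv ℝ (fun y => f y s) z) (bound := fun _ => C) hKz ?_ ?_ ?_ ?_
    intervalIntegrable_const ?_
  · exact .of_forall fun y => (hf.continuous.comp (.prodMk_right y)).aestronglyMeasurable
  · exact (hf.continuous.comp (.prodMk_right z)).intervalIntegrable a b
  · exact (hf'.comp (.prodMk_right z)).aestronglyMeasurable
  · exact .of_forall fun s hs y hy => hC (y, s) ⟨hy, Set.uIoc_subset_uIcc hs⟩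
  · refine .of_forall fun s _ y _ => (ContDiff.differentiable ?_ one_ne_zero y).hasFDerivAt
    exact hf.comp (contDiff_id.prodMk contDiff_const)

lemma contDiff_intervalIntegral {n : ℕ} {f : H → ℝ → G} (hf : ContDiff ℝ n (Function.uncurry f))
    (a b : ℝ) : ContDiff ℝ n (fun z => ∫ s in a..b, f z s) := by
  induction n generalizing G with
  | zero =>
    rw [Nat.cast_zero, contDiff_zero] at *
    exact intervalIntegral.continuous_parametric_intervalIntegral_of_continuous' hf a b
  | succ n ih =>
    have hf' : ContDiff ℝ n (Function.uncurry fun z s => fderiv ℝ (fun y => f y s) z) :=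
      ContDiff.fderiv (f := fun (p : H × ℝ) (y : H) => f y p.2) (m := (n + 1 : ℕ))
        (hf.comp (contDiff_snd.prodMk (contDiff_snd.comp contDiff_fst))) contDiff_fst
        (by norm_cast)
    push_cast
    exact contDiff_succ_iff_hasFDerivAt.2 ⟨_, ih hf',
      hasFDerivAt_intervalIntegral_of_contDiff (hf.of_le (by norm_cast; omega)) a b⟩

end ParametricIntegral

section TimePrimitive

variable {N : ℕ} {w : EuclideanSpace ℝ (Fin N) → ℝ → ℝ}

/-- The time primitive `∫₀ᵗ w(x,s) ds` of a function of space and time. -/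
def timePrimitive (w : EuclideanSpace ℝ (Fin N) → ℝ → ℝ) (x : EuclideanSpace ℝ (Fin N))
    (t : ℝ) : ℝ :=
  ∫ s in (0 : ℝ)..t, w x s

lemma contDiff_timePrimitive {n : ℕ} (h : ContDiff ℝ n (Function.uncurry w)) :
    ContDiff ℝ n (Function.uncurry (timePrimitive w)) := by
  have hscale : Function.uncurry (timePrimitive w) =
      fun p => p.2 * ∫ s in (0 : ℝ)..1, w p.1 (p.2 * s) := by
    ext p
    simp [timePrimitive, Function.uncurry]
  rw [hscale]
  refine contDiff_snd.mul (contDiff_intervalIntegral ?_ 0 1)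
  exact h.comp ((contDiff_fst.comp contDiff_fst).prodMk
    ((contDiff_snd.comp contDiff_fst).mul contDiff_snd))

lemma dt_timePrimitive (h : Continuous (Function.uncurry w)) : dt (timePrimitive w) = w :=
  funext fun x => funext fun t => ((h.comp (.prodMk_right x)).deriv_integral (w x) 0 t)

lemma dx_timePrimitive (h : ContDiff ℝ 1 (Function.uncurry w)) (i : Fin N) :
    dx (timePrimitive w) i = timePrimitive (dx w i) := by
  ext x t
  have hint : IntervalIntegrable (fun s => fderiv ℝ (fun y => w y s) x) volume 0 t :=
    Continuous.intervalIntegrable ((ContDiff.fderiv (m := 1) (n := 0)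
      (f := fun (s : ℝ) (y : EuclideanSpace ℝ (Fin N)) => w y s)
      (h.comp (contDiff_snd.prodMk contDiff_fst)) contDiff_const (by simp)).continuous) 0 t
  calc dx (timePrimitive w) i x t
      = (∫ s in (0 : ℝ)..t, fderiv ℝ (fun y => w y s) x) (EuclideanSpace.single i 1) :=
        DFunLike.congr_fun (hasFDerivAt_intervalIntegral_of_contDiff h 0 t x).fderiv _
    _ = timePrimitive (dx w i) x t := ContinuousLinearMap.intervalIntegral_apply hint _

end TimePrimitive

section DivergenceTheorem

variable {E : Type*} [NormedAddCommGroup E] [NormedSpace ℝ E] [FiniteDimensional ℝ E]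

lemma lipschitzWith_indicator {Ω : Set E} {f : E → ℝ} {C : NNReal} (hf : LipschitzWith C f)
    (hf₀ : ∀ x ∈ frontier Ω, f x = 0) : LipschitzWith C (Ω.indicator f) := by
  have hcross : ∀ x ∈ Ω, ∀ y ∉ Ω, dist (f x) 0 ≤ C * dist x y := by
    intro x hx y hy
    obtain ⟨z, hz, hxz⟩ :=
      exists_mem_frontier_infDist_compl_eq_dist hx fun h : Ω = Set.univ => hy (h ▸ Set.mem_univ y)
    calc dist (f x) 0 ≤ C * dist x z := hf₀ z hz ▸ hf.dist_le_mul x z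
      _ ≤ C * dist x y := by
        rw [← hxz]
        gcongr
        exact Metric.infDist_le_dist_of_mem hy
  refine LipschitzWith.of_dist_le_mul fun x y => ?_
  by_cases hx : x ∈ Ω <;> by_cases hy : y ∈ Ω
  · simpa [hx, hy] using hf.dist_le_mul x y
  · simpa [hx, hy] using hcross x hx y hy
  · simpa [hx, hy, dist_comm] using hcross y hy x hx
  · simpa [hx, hy] using by positivity

lemma countable_setOf_eq_zero_and_deriv_ne_zero (h : ℝ → ℝ) :
    {t | h t = 0 ∧ deriv h t ≠ 0}.Countable := by
  set Z := {t | h t = 0 ∧ deriv h t ≠ 0}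
  refine Set.Countable.mono (fun t ht => ?_) (countable_setOfPred_isolated_right_within (s := Z))
  have hne : ∀ᶠ s in nhdsWithin t {t}ᶜ, h s ≠ 0 :=
    (differentiableAt_of_deriv_ne_zero ht.2).hasDerivAt.eventually_ne ht.2
  rw [eventually_nhdsWithin_iff] at hne
  refine ⟨ht, ?_⟩
  rw [← empty_mem_iff_bot, mem_nhdsWithin_iff_exists_mem_nhds_inter]
  exact ⟨_, hne, fun s hs => hs.1 hs.2.2.ne' hs.2.1.1⟩

variable [MeasurableSpace E] [BorelSpace E] {μ : Measure E} [μ.IsAddHaarMeasure]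

lemma ae_lineDeriv_eq_zero_of_eq_zero {f : E → ℝ} (hf : Continuous f) (v : E) :
    ∀ᵐ x ∂μ, f x = 0 → lineDeriv ℝ f x v = 0 := by
  have hmeas : MeasurableSet {x | f x = 0 → lineDeriv ℝ f x v = 0} :=
    (measurableSet_eq_fun hf.measurable measurable_const).imp
      (measurableSet_eq_fun (measurable_lineDeriv hf) measurable_const)
  refine ae_mem_of_ae_add_linearMap_mem (LinearMap.toSpanSingleton ℝ E v) volume μ hmeas
    fun y => ?_
  filter_upwards [(countable_setOf_eq_zero_and_deriv_ne_zero
    fun t : ℝ => f (y + t • v)).ae_notMem volume] with t ht hft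
  have hshift : lineDeriv ℝ f (y + t • v) v = deriv (fun t : ℝ => f (y + t • v)) t := by
    simp_rw [lineDeriv, add_assoc, ← add_smul]
    simpa using deriv_comp_const_add (fun t : ℝ => f (y + t • v)) t 0
  simpa [hshift] using not_and.1 ht hft

lemma integral_lineDeriv_eq_zero {f : E → ℝ} {C : NNReal} (hf : LipschitzWith C f)
    (hc : HasCompactSupport f) (v : E) : ∫ x, lineDeriv ℝ f x v ∂μ = 0 := by
  simpa [lineDeriv] using
    (LipschitzWith.integral_lineDeriv_mul_eq (μ := μ) (.const (1 : ℝ)) hf hc (-v)).symm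

/-- No regularity of `frontier Ω` is needed: the extension of `f` by zero is Lipschitz, and its
derivative vanishes almost everywhere on its zero set. -/
theorem setIntegral_lineDeriv_eq_zero {Ω : Set E} (hΩ : MeasurableSet Ω) {f : E → ℝ} {C : NNReal}
    (hf : LipschitzWith C f) (hc : HasCompactSupport f) (hf₀ : ∀ x ∈ frontier Ω, f x = 0) (v : E) :
    ∫ x in Ω, lineDeriv ℝ f x v ∂μ = 0 := by
  have hext := lipschitzWith_indicator hf hf₀
  rw [← integral_indicator hΩ, ← integral_lineDeriv_eq_zero (μ := μ) hext (hc.mono ?_) v]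
  · refine integral_congr_ae ?_
    filter_upwards [ae_lineDeriv_eq_zero_of_eq_zero hf.continuous v,
      ae_lineDeriv_eq_zero_of_eq_zero hext.continuous v] with x hfx hgx
    by_cases hx : x ∈ Ω
    · rw [Set.indicator_of_mem hx] at hgx ⊢
      by_cases hfx0 : f x = 0
      · rw [hfx hfx0, hgx hfx0]
      · have hint : x ∈ interior Ω := by
          by_contra h
          exact hfx0 (hf₀ x ⟨subset_closure hx, h⟩)
        refine (EventuallyEq.lineDeriv_eq ?_).symm
        filter_upwards [mem_interior_iff_mem_nhds.1 hint] with y hy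
        exact Set.indicator_of_mem hy f
    · rw [Set.indicator_of_notMem hx] at hgx ⊢
      exact (hgx rfl).symm
  · exact Set.support_indicator.trans_subset Set.inter_subset_right

theorem setIntegral_fderiv_eq_zero {Ω : Set E} (hΩ : MeasurableSet Ω) {f : E → ℝ}
    (hf : ContDiff ℝ 1 f) (hc : HasCompactSupport f) (hf₀ : ∀ x ∈ frontier Ω, f x = 0) (v : E) :
    ∫ x in Ω, fderiv ℝ f x v ∂μ = 0 := by
  obtain ⟨C, hC⟩ := hf.lipschitzWith_of_hasCompactSupport hc one_ne_zero
  simpa only [(hf.differentiable one_ne_zero _).lineDeriv_eq_fderiv] using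
    setIntegral_lineDeriv_eq_zero (μ := μ) hΩ hC hc hf₀ v

end DivergenceTheorem

section IntegralsOverCompactSets

variable {X : Type*} [TopologicalSpace X] [T2Space X] [MeasurableSpace X]
  [OpensMeasurableSpace X] {μ : Measure X} {K : Set X} {T : Set ℝ} {e e' : X → ℝ → ℝ}

lemma aestronglyMeasurable_slice (hK : IsCompact K)
    (he : ContinuousOn (Function.uncurry e) (K ×ˢ T)) {t : ℝ} (ht : t ∈ T) :
    AEStronglyMeasurable (fun x => e x t) (μ.restrict K) :=
  (he.comp (Continuous.prodMk_left t).continuousOn fun _ hx => ⟨hx, ht⟩).aestronglyMeasurable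
    hK.measurableSet

variable [IsFiniteMeasureOnCompacts μ]

lemma continuousOn_setIntegral_of_isCompact (hK : IsCompact K) (hT : IsCompact T)
    (he : ContinuousOn (Function.uncurry e) (K ×ˢ T)) :
    ContinuousOn (fun t => ∫ x in K, e x t ∂μ) T := by
  obtain ⟨C, hC⟩ := (hK.prod hT).exists_bound_of_continuousOn he
  refine continuousOn_of_dominated (bound := fun _ => C)
    (fun t ht => aestronglyMeasurable_slice hK he ht) (fun t ht => ?_)
    (integrableOn_const hK.measure_lt_top.ne) ?_
  · exact (ae_restrict_iff' hK.measurableSet).2 (.of_forall fun x hx => hC (x, t) ⟨hx, ht⟩)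
  · refine (ae_restrict_iff' hK.measurableSet).2 (.of_forall fun x hx => ?_)
    exact he.comp (Continuous.prodMk_right x).continuousOn fun t ht => ⟨hx, ht⟩

lemma hasDerivAt_setIntegral_of_isCompact (hK : IsCompact K) (hT : IsCompact T)
    (he : ContinuousOn (Function.uncurry e) (K ×ˢ T))
    (he' : ContinuousOn (Function.uncurry e') (K ×ˢ T))
    (hd : ∀ᵐ x ∂μ.restrict K, ∀ t ∈ T, HasDerivAt (e x) (e' x t) t) {t : ℝ} (ht : T ∈ nhds t) :
    HasDerivAt (fun t => ∫ x in K, e x t ∂μ) (∫ x in K, e' x t ∂μ) t := by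
  obtain ⟨C, hC⟩ := (hK.prod hT).exists_bound_of_continuousOn he
  obtain ⟨C', hC'⟩ := (hK.prod hT).exists_bound_of_continuousOn he'
  have htT : t ∈ T := mem_of_mem_nhds ht
  refine (hasDerivAt_integral_of_dominated_loc_of_deriv_le (F := fun t x => e x t)
    (F' := fun t x => e' x t) (bound := fun _ => C') ht ?_ ?_
    (aestronglyMeasurable_slice hK he' htT) ?_
    (integrableOn_const (μ := μ) hK.measure_lt_top.ne) hd).2
  · filter_upwards [ht] with s hs using aestronglyMeasurable_slice hK he hs
  · exact Integrable.mono' (integrableOn_const (μ := μ) hK.measure_lt_top.ne)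
      (aestronglyMeasurable_slice hK he htT)
      ((ae_restrict_iff' hK.measurableSet).2 (.of_forall fun x hx => hC (x, t) ⟨hx, htT⟩))
  · exact (ae_restrict_iff' hK.measurableSet).2
      (.of_forall fun x hx s hs => hC' (x, s) ⟨hx, hs⟩)

end IntegralsOverCompactSets

section BoundedSupport

variable {E : Type*} [NormedAddCommGroup E] [MeasurableSpace E] [BorelSpace E]
  {μ : Measure E} {Ω : Set E} {R : ℝ} {f : E → ℝ}

lemma setIntegral_eq_setIntegral_closedBall (hΩ : MeasurableSet Ω)
    (hf₀ : ∀ x ∈ Ω, R < ‖x‖ → f x = 0) :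
    ∫ x in Ω, f x ∂μ = ∫ x in closure Ω ∩ Metric.closedBall 0 R, f x ∂μ.restrict Ω := by
  have hK : MeasurableSet (closure Ω ∩ Metric.closedBall 0 R) :=
    (isClosed_closure.inter Metric.isClosed_closedBall).measurableSet
  rw [Measure.restrict_restrict hK]
  refine setIntegral_eq_of_subset_of_forall_sdiff_eq_zero hΩ Set.inter_subset_right
    fun x hx => hf₀ x hx.1 ?_
  by_contra! h
  exact hx.2 ⟨⟨subset_closure hx.1, mem_closedBall_zero_iff.2 h⟩, hx.1⟩

lemma integrableOn_of_eq_zero_of_lt_norm [ProperSpace E] [IsFiniteMeasureOnCompacts μ]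
    (hΩ : MeasurableSet Ω) (hf : ContinuousOn f (closure Ω)) (hf₀ : ∀ x ∈ Ω, R < ‖x‖ → f x = 0) :
    IntegrableOn f Ω μ := by
  have hK : IsCompact (closure Ω ∩ Metric.closedBall 0 R) :=
    (isCompact_closedBall 0 R).inter_left isClosed_closure
  refine IntegrableOn.of_forall_sdiff_eq_zero
    (((hf.mono Set.inter_subset_left).integrableOn_compact hK).mono_set
      (Set.inter_subset_inter_left _ subset_closure)) hΩ fun x hx => hf₀ x hx.1 ?_
  by_contra! h
  exact hx.2 ⟨hx.1, mem_closedBall_zero_iff.2 h⟩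

end BoundedSupport

section EnergyBalance

variable {N : ℕ} {Ω : Set (EuclideanSpace ℝ (Fin N))} {R₀ : ℝ}
  {e e' e₁ e₁' e₂ e₂' : EuclideanSpace ℝ (Fin N) → ℝ → ℝ}
  {F F₁ F₂ : Fin N → EuclideanSpace ℝ (Fin N) → ℝ → ℝ}

/-- A density `e` on `Ω × [0,∞)` with time derivative `e'`, together with a flux `F`: both `e` and
`F` propagate at speed one from `B(0,R₀)`, and `F` vanishes on the boundary. The balance itself is
an inequality between `e'` and `div F`, kept out of the structure so that several densities can be
added before it is checked. -/
structure IsDensityWithFlux (Ω : Set (EuclideanSpace ℝ (Fin N))) (R₀ : ℝ)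
    (e e' : EuclideanSpace ℝ (Fin N) → ℝ → ℝ) (F : Fin N → EuclideanSpace ℝ (Fin N) → ℝ → ℝ) :
    Prop where
  continuousOn : ContinuousOn (Function.uncurry e) (closure Ω ×ˢ Set.Ici 0)
  continuousOn_deriv : ContinuousOn (Function.uncurry e') (closure Ω ×ˢ Set.Ici 0)
  hasDerivAt : ∀ x ∈ Ω, ∀ t > (0 : ℝ), HasDerivAt (e x) (e' x t) t
  eq_zero_of_lt_norm : ∀ x, ∀ t ≥ (0 : ℝ), R₀ + t < ‖x‖ → e x t = 0
  contDiff_flux : ∀ i, ∀ t > (0 : ℝ), ContDiff ℝ 1 (fun x => F i x t)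
  flux_eq_zero_of_lt_norm : ∀ i x, ∀ t > (0 : ℝ), R₀ + t < ‖x‖ → F i x t = 0
  flux_eq_zero_of_mem_frontier : ∀ i, ∀ x ∈ frontier Ω, ∀ t > (0 : ℝ), F i x t = 0

namespace IsDensityWithFlux

lemma add (h₁ : IsDensityWithFlux Ω R₀ e₁ e₁' F₁) (h₂ : IsDensityWithFlux Ω R₀ e₂ e₂' F₂) :
    IsDensityWithFlux Ω R₀ (fun x t => e₁ x t + e₂ x t) (fun x t => e₁' x t + e₂' x t)
      (fun i x t => F₁ i x t + F₂ i x t) where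
  continuousOn := h₁.continuousOn.add h₂.continuousOn
  continuousOn_deriv := h₁.continuousOn_deriv.add h₂.continuousOn_deriv
  hasDerivAt x hx t ht := (h₁.hasDerivAt x hx t ht).add (h₂.hasDerivAt x hx t ht)
  eq_zero_of_lt_norm x t ht hx := by
    rw [h₁.eq_zero_of_lt_norm x t ht hx, h₂.eq_zero_of_lt_norm x t ht hx, add_zero]
  contDiff_flux i t ht := (h₁.contDiff_flux i t ht).add (h₂.contDiff_flux i t ht)
  flux_eq_zero_of_lt_norm i x t ht hx := by
    rw [h₁.flux_eq_zero_of_lt_norm i x t ht hx, h₂.flux_eq_zero_of_lt_norm i x t ht hx, add_zero]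
  flux_eq_zero_of_mem_frontier i x hx t ht := by
    rw [h₁.flux_eq_zero_of_mem_frontier i x hx t ht, h₂.flux_eq_zero_of_mem_frontier i x hx t ht,
      add_zero]

lemma deriv_eq_zero_of_lt_norm (h : IsDensityWithFlux Ω R₀ e e' F)
    {x : EuclideanSpace ℝ (Fin N)} (hx : x ∈ Ω) {t : ℝ} (ht : 0 < t) (hxt : R₀ + t < ‖x‖) :
    e' x t = 0 := by
  have hzero : e x =ᶠ[nhds t] fun _ => 0 := by
    filter_upwards [Ioo_mem_nhds ht (lt_sub_iff_add_lt'.2 hxt)] with s hs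
    exact h.eq_zero_of_lt_norm x s hs.1.le (lt_sub_iff_add_lt'.1 hs.2)
  exact (h.hasDerivAt x hx t ht).unique ((hasDerivAt_const t 0).congr_of_eventuallyEq hzero)

lemma integrableOn (h : IsDensityWithFlux Ω R₀ e e' F) (hΩ : MeasurableSet Ω) {t : ℝ}
    (ht : 0 ≤ t) : IntegrableOn (fun x => e x t) Ω :=
  integrableOn_of_eq_zero_of_lt_norm hΩ
    (h.continuousOn.comp (Continuous.prodMk_left t).continuousOn fun _ hx => ⟨hx, ht⟩)
    fun x _ => h.eq_zero_of_lt_norm x t ht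

lemma integrableOn_deriv (h : IsDensityWithFlux Ω R₀ e e' F) (hΩ : MeasurableSet Ω) {t : ℝ}
    (ht : 0 < t) : IntegrableOn (fun x => e' x t) Ω :=
  integrableOn_of_eq_zero_of_lt_norm hΩ
    (h.continuousOn_deriv.comp (Continuous.prodMk_left t).continuousOn fun _ hx => ⟨hx, ht.le⟩)
    fun _ hx => h.deriv_eq_zero_of_lt_norm hx ht

lemma setIntegral_eq (h : IsDensityWithFlux Ω R₀ e e' F) (hΩ : MeasurableSet Ω) {τ t : ℝ}
    (ht : t ∈ Set.Icc 0 τ) : ∫ x in Ω, e x t =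
      ∫ x in closure Ω ∩ Metric.closedBall 0 (R₀ + τ), e x t ∂volume.restrict Ω :=
  setIntegral_eq_setIntegral_closedBall hΩ fun x _ hx =>
    h.eq_zero_of_lt_norm x t ht.1 (hx.trans_le' (by linarith [ht.2]))

lemma continuousOn_setIntegral (h : IsDensityWithFlux Ω R₀ e e' F) (hΩ : MeasurableSet Ω) (τ : ℝ) :
    ContinuousOn (fun t => ∫ x in Ω, e x t) (Set.Icc 0 τ) :=
  (continuousOn_setIntegral_of_isCompact ((isCompact_closedBall _ _).inter_left isClosed_closure)
    isCompact_Icc (h.continuousOn.mono (Set.prod_mono Set.inter_subset_left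
      Set.Icc_subset_Ici_self))).congr fun _ => h.setIntegral_eq hΩ

lemma hasDerivAt_setIntegral (h : IsDensityWithFlux Ω R₀ e e' F) (hΩ : MeasurableSet Ω) {t : ℝ}
    (ht : 0 < t) : HasDerivAt (fun t => ∫ x in Ω, e x t) (∫ x in Ω, e' x t) t := by
  have hsub : (closure Ω ∩ Metric.closedBall 0 (R₀ + (t + 1))) ×ˢ Set.Icc (t / 2) (t + 1) ⊆
      closure Ω ×ˢ Set.Ici 0 :=
    Set.prod_mono Set.inter_subset_left fun s hs => (by linarith [hs.1] : (0 : ℝ) ≤ s)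
  have hnhds : Set.Icc (t / 2) (t + 1) ∈ nhds t := Icc_mem_nhds (by linarith) (by linarith)
  have hder := hasDerivAt_setIntegral_of_isCompact (μ := volume.restrict Ω)
    ((isCompact_closedBall _ _).inter_left isClosed_closure) isCompact_Icc
    (h.continuousOn.mono hsub) (h.continuousOn_deriv.mono hsub)
    (ae_restrict_of_ae ((ae_restrict_iff' hΩ).2 (.of_forall fun x hx s hs =>
      h.hasDerivAt x hx s (by linarith [hs.1])))) hnhds
  rw [setIntegral_eq_setIntegral_closedBall (R := R₀ + (t + 1)) hΩ fun x hx hxt =>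
    h.deriv_eq_zero_of_lt_norm hx ht (hxt.trans' (by linarith))]
  refine hder.congr_of_eventuallyEq ?_
  filter_upwards [hnhds] with s hs
  exact h.setIntegral_eq hΩ ⟨by linarith [hs.1], hs.2⟩

lemma hasCompactSupport_flux (h : IsDensityWithFlux Ω R₀ e e' F) (i : Fin N) {t : ℝ} (ht : 0 < t) :
    HasCompactSupport fun x => F i x t :=
  .intro (isCompact_closedBall 0 (R₀ + t)) fun x hx =>
    h.flux_eq_zero_of_lt_norm i x t ht (by simpa using hx)

lemma integrable_dx_flux (h : IsDensityWithFlux Ω R₀ e e' F) (i : Fin N) {t : ℝ} (ht : 0 < t) :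
    Integrable fun x => dx (F i) i x t :=
  (((h.contDiff_flux i t ht).continuous_fderiv one_ne_zero).clm_apply
    continuous_const).integrable_of_hasCompactSupport
      ((h.hasCompactSupport_flux i ht).fderiv_apply ℝ _)

lemma setIntegral_div_flux_eq_zero (h : IsDensityWithFlux Ω R₀ e e' F) (hΩ : MeasurableSet Ω)
    {t : ℝ} (ht : 0 < t) : ∫ x in Ω, ∑ i, dx (F i) i x t = 0 := by
  rw [integral_finsetSum _ fun i _ => (h.integrable_dx_flux i ht).integrableOn]
  exact Finset.sum_eq_zero fun i _ => setIntegral_fderiv_eq_zero hΩ (h.contDiff_flux i t ht)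
    (h.hasCompactSupport_flux i ht) (fun x hx => h.flux_eq_zero_of_mem_frontier i x hx t ht) _

theorem setIntegral_le_initial (h : IsDensityWithFlux Ω R₀ e e' F) (hΩ : MeasurableSet Ω)
    (hle : ∀ x ∈ Ω, ∀ t > (0 : ℝ), e' x t ≤ ∑ i, dx (F i) i x t) {τ : ℝ} (hτ : 0 ≤ τ) :
    ∫ x in Ω, e x τ ≤ ∫ x in Ω, e x 0 := by
  have hderiv : ∀ t > (0 : ℝ), deriv (fun t => ∫ x in Ω, e x t) t ≤ 0 := fun t ht =>
    calc deriv (fun t => ∫ x in Ω, e x t) t = ∫ x in Ω, e' x t :=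
          (h.hasDerivAt_setIntegral hΩ ht).deriv
      _ ≤ ∫ x in Ω, ∑ i, dx (F i) i x t := setIntegral_mono_on (h.integrableOn_deriv hΩ ht)
          (integrable_finsetSum _ fun i _ => (h.integrable_dx_flux i ht).integrableOn) hΩ
          fun x hx => hle x hx t ht
      _ = 0 := h.setIntegral_div_flux_eq_zero hΩ ht
  refine antitoneOn_of_deriv_nonpos (convex_Icc 0 τ) (h.continuousOn_setIntegral hΩ τ) ?_ ?_
    ⟨le_rfl, hτ⟩ ⟨hτ, le_rfl⟩ hτ
  · rw [interior_Icc]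
    exact fun t ht =>
      (h.hasDerivAt_setIntegral hΩ ht.1).differentiableAt.differentiableWithinAt
  · rw [interior_Icc]
    exact fun t ht => hderiv t ht.1

end IsDensityWithFlux

end EnergyBalance

section DampedWaveSolution

namespace IsDampedWaveSolution

variable {N : ℕ} {Ω : Set (EuclideanSpace ℝ (Fin N))} {a : EuclideanSpace ℝ (Fin N) → ℝ}
  {R₀ : ℝ} {u : EuclideanSpace ℝ (Fin N) → ℝ → ℝ}

lemma of_le {k m : ℕ} (hu : IsDampedWaveSolution k Ω a R₀ u) (hmk : m ≤ k) :
    IsDampedWaveSolution m Ω a R₀ u :=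
  ⟨hu.1.of_le (by exact_mod_cast hmk), hu.2⟩

lemma contDiff {k : ℕ} (hu : IsDampedWaveSolution k Ω a R₀ u) :
    ContDiff ℝ k (Function.uncurry u) := hu.1

variable {x : EuclideanSpace ℝ (Fin N)} {t : ℝ}

lemma dt_dt_eq {k : ℕ} (hu : IsDampedWaveSolution k Ω a R₀ u) (hx : x ∈ Ω) (ht : 0 < t) :
    dt (dt u) x t = ∑ i, dx (dx u i) i x t - a x * dt u x t := by
  have hwave : dt (dt u) x t - ∑ i, dx (dx u i) i x t + a x * dt u x t = 0 := hu.2.1 x hx t ht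
  linarith

lemma eq_zero_of_lt_norm {k : ℕ} (hu : IsDampedWaveSolution k Ω a R₀ u) (ht : 0 ≤ t)
    (hx : R₀ + t < ‖x‖) : u x t = 0 := by
  by_contra h
  have hmem := hu.2.2.2.2.2 t ht (subset_tsupport (fun x => u x t) h)
  exact hx.not_ge (mem_closedBall_zero_iff.1 hmem)

lemma dx_eq_zero_of_lt_norm {k : ℕ} (hu : IsDampedWaveSolution k Ω a R₀ u) (i : Fin N)
    (ht : 0 ≤ t) (hx : R₀ + t < ‖x‖) : dx u i x t = 0 := by
  refine dx_eq_zero_of_eventuallyEq ?_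
  filter_upwards [continuous_norm.continuousAt.eventually_mem (lt_mem_nhds hx)] with y hy
  exact hu.eq_zero_of_lt_norm ht hy

lemma dt_eq_zero_of_lt_norm (hu : IsDampedWaveSolution 2 Ω a R₀ u) (ht : 0 ≤ t)
    (hx : R₀ + t < ‖x‖) : dt u x t = 0 := by
  have hright := (hasDerivAt_dt (hu.contDiff.of_le one_le_two) x t).hasDerivWithinAt
    (s := Set.Ici t)
  refine (uniqueDiffWithinAt_Ici t).eq_deriv _ hright ?_
  refine (hasDerivWithinAt_const t (Set.Ici t) (0 : ℝ)).congr_of_eventuallyEq ?_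
    (hu.eq_zero_of_lt_norm ht hx)
  filter_upwards [self_mem_nhdsWithin,
    mem_nhdsWithin_of_mem_nhds (Iio_mem_nhds (lt_sub_iff_add_lt'.2 hx))] with s hts hs
  exact hu.eq_zero_of_lt_norm (ht.trans hts) (lt_sub_iff_add_lt'.1 hs)

lemma eq_zero_of_mem_frontier {k : ℕ} (hu : IsDampedWaveSolution k Ω a R₀ u)
    (hx : x ∈ frontier Ω) (ht : 0 < t) : u x t = 0 :=
  hu.2.2.1 x hx t ht

lemma dt_eq_zero_of_mem_frontier {k : ℕ} (hu : IsDampedWaveSolution k Ω a R₀ u)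
    (hx : x ∈ frontier Ω) (ht : 0 < t) : dt u x t = 0 := by
  have hzero : u x =ᶠ[nhds t] fun _ => 0 := by
    filter_upwards [Ioi_mem_nhds ht] with s hs
    exact hu.eq_zero_of_mem_frontier hx hs
  simp [dt, hzero.deriv_eq]

end IsDampedWaveSolution

end DampedWaveSolution

section WeightedEnergy

variable {N : ℕ} {Ω : Set (EuclideanSpace ℝ (Fin N))} {a B : EuclideanSpace ℝ (Fin N) → ℝ}
  {u : EuclideanSpace ℝ (Fin N) → ℝ → ℝ} {R₀ K lam t₀ : ℝ}

/-- The weight `Ψ = (t₀ + t)^λ exp(B(x) / (t₀ + t))`. -/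
def expWeight (B : EuclideanSpace ℝ (Fin N) → ℝ) (lam t₀ : ℝ)
    (x : EuclideanSpace ℝ (Fin N)) (t : ℝ) : ℝ :=
  (t₀ + t) ^ lam * Real.exp (B x / (t₀ + t))

/-- The density `(K (uₜ² + |∇u|²) + 2 u uₜ + a u²) Ψ` of the weighted energy. -/
def energyDensity (a : EuclideanSpace ℝ (Fin N) → ℝ) (u : EuclideanSpace ℝ (Fin N) → ℝ → ℝ)
    (B : EuclideanSpace ℝ (Fin N) → ℝ) (K lam t₀ : ℝ)
    (x : EuclideanSpace ℝ (Fin N)) (t : ℝ) : ℝ :=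
  (K * (dt u x t ^ 2 + ∑ i, dx u i x t ^ 2) + 2 * (u x t * dt u x t) + a x * u x t ^ 2)
    * expWeight B lam t₀ x t

/-- The time derivative of `energyDensity`. -/
def energyDensityDeriv (a : EuclideanSpace ℝ (Fin N) → ℝ)
    (u : EuclideanSpace ℝ (Fin N) → ℝ → ℝ)
    (B : EuclideanSpace ℝ (Fin N) → ℝ) (K lam t₀ : ℝ)
    (x : EuclideanSpace ℝ (Fin N)) (t : ℝ) : ℝ :=
  (K * (2 * dt u x t * dt (dt u) x t + ∑ i, 2 * dx u i x t * dt (dx u i) x t)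
      + 2 * (dt u x t * dt u x t + u x t * dt (dt u) x t)
      + a x * (2 * u x t * dt u x t)) * expWeight B lam t₀ x t
  + (K * (dt u x t ^ 2 + ∑ i, dx u i x t ^ 2) + 2 * (u x t * dt u x t) + a x * u x t ^ 2)
    * (expWeight B lam t₀ x t * (lam / (t₀ + t) - B x / (t₀ + t) ^ 2))

/-- The `i`-th component `(2 K uₜ + 2 u) ∂ᵢu Ψ + u² ∂ᵢΨ` of the flux of the weighted energy. -/
def energyFlux (u : EuclideanSpace ℝ (Fin N) → ℝ → ℝ)
    (B : EuclideanSpace ℝ (Fin N) → ℝ) (K lam t₀ : ℝ) (i : Fin N)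
    (x : EuclideanSpace ℝ (Fin N)) (t : ℝ) : ℝ :=
  ((2 * K * dt u x t + 2 * u x t) * dx u i x t
    + u x t ^ 2 * (fderiv ℝ B x (EuclideanSpace.single i 1) / (t₀ + t)))
    * expWeight B lam t₀ x t

lemma expWeight_pos (ht₀ : 0 < t₀) {x : EuclideanSpace ℝ (Fin N)} {t : ℝ} (ht : 0 ≤ t) :
    0 < expWeight B lam t₀ x t :=
  mul_pos (Real.rpow_pos_of_pos (by linarith) _) (Real.exp_pos _)

lemma rpow_le_expWeight (ht₀ : 0 < t₀) {x : EuclideanSpace ℝ (Fin N)} (hB : 0 ≤ B x) {t : ℝ}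
    (ht : 0 ≤ t) : (t₀ + t) ^ lam ≤ expWeight B lam t₀ x t :=
  have hT : 0 ≤ t₀ + t := by linarith
  le_mul_of_one_le_right (Real.rpow_nonneg hT _) (Real.one_le_exp (div_nonneg hB hT))

lemma hasDerivAt_expWeight (ht₀ : 0 < t₀) (x : EuclideanSpace ℝ (Fin N)) {t : ℝ} (ht : 0 ≤ t) :
    HasDerivAt (expWeight B lam t₀ x)
      (expWeight B lam t₀ x t * (lam / (t₀ + t) - B x / (t₀ + t) ^ 2)) t := by
  have hT : 0 < t₀ + t := by linarith
  have hadd : HasDerivAt (fun t => t₀ + t) 1 t := (hasDerivAt_id t).const_add t₀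
  have hpow := hadd.rpow_const (p := lam) (Or.inl hT.ne')
  have hexp := ((hasDerivAt_const t (B x)).div hadd hT.ne').exp
  refine (hpow.mul hexp).congr_deriv ?_
  simp only [expWeight, Pi.div_apply, Real.rpow_sub_one hT.ne']
  field_simp
  ring

lemma continuousOn_expWeight (hB : Continuous B) (ht₀ : 0 < t₀)
    (s : Set (EuclideanSpace ℝ (Fin N))) :
    ContinuousOn (Function.uncurry (expWeight B lam t₀)) (s ×ˢ Set.Ici 0) := by
  have hT : ∀ p ∈ s ×ˢ Set.Ici (0 : ℝ), t₀ + p.2 ≠ 0 :=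
    fun p hp => (add_pos_of_pos_of_nonneg ht₀ hp.2).ne'
  have hadd : ContinuousOn (fun p : EuclideanSpace ℝ (Fin N) × ℝ => t₀ + p.2) (s ×ˢ Set.Ici 0) := by
    fun_prop
  exact (hadd.rpow_const fun p hp => Or.inl (hT p hp)).mul
    ((hB.comp continuous_fst).continuousOn.div hadd hT).rexp

lemma contDiff_expWeight {n : WithTop ℕ∞} (hB : ContDiff ℝ n B) (t : ℝ) :
    ContDiff ℝ n (fun x => expWeight B lam t₀ x t) :=
  contDiff_const.mul (hB.div_const _).exp

lemma hasDerivAt_energyDensity (hu : ContDiff ℝ 2 (Function.uncurry u)) (ht₀ : 0 < t₀)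
    (x : EuclideanSpace ℝ (Fin N)) {t : ℝ} (ht : 0 ≤ t) :
    HasDerivAt (energyDensity a u B K lam t₀ x) (energyDensityDeriv a u B K lam t₀ x t) t := by
  have hu₀ := hasDerivAt_dt (hu.of_le one_le_two) x t
  have hut := hasDerivAt_dt (contDiff_dt hu one_add_one_eq_two.le) x t
  have hgrad : HasDerivAt (fun t => ∑ i, dx u i x t ^ 2)
      (∑ i, 2 * dx u i x t * dt (dx u i) x t) t :=
    HasDerivAt.fun_sum fun i _ =>
      ((hasDerivAt_dt (contDiff_dx hu one_add_one_eq_two.le i) x t).pow 2).congr_deriv (by simp)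
  refine ((((((hut.pow 2).add hgrad).const_mul K).add ((hu₀.mul hut).const_mul 2)).add
    ((hu₀.pow 2).const_mul (a x))).mul (hasDerivAt_expWeight ht₀ x ht)).congr_deriv ?_
  simp [energyDensityDeriv]

lemma continuousOn_energyDensity (hu : ContDiff ℝ 2 (Function.uncurry u)) (hB : Continuous B)
    {s : Set (EuclideanSpace ℝ (Fin N))} (ha : ContinuousOn a s) (ht₀ : 0 < t₀) :
    ContinuousOn (Function.uncurry (energyDensity a u B K lam t₀)) (s ×ˢ Set.Ici 0) := by
  have hu₀ := hu.continuous.continuousOn (s := s ×ˢ Set.Ici 0)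
  have hut := (contDiff_dt hu one_add_one_eq_two.le).continuous.continuousOn (s := s ×ˢ Set.Ici 0)
  have hgrad := (continuous_finsetSum Finset.univ fun i _ =>
    (contDiff_dx hu one_add_one_eq_two.le i).continuous.pow 2).continuousOn (s := s ×ˢ Set.Ici 0)
  have hΨ := continuousOn_expWeight (lam := lam) hB ht₀ s
  simp only [Function.uncurry_def] at *
  unfold energyDensity
  fun_prop (disch := exact Set.mapsTo_fst_prod)

lemma continuousOn_energyDensityDeriv (hu : ContDiff ℝ 2 (Function.uncurry u))
    (hB : Continuous B) {s : Set (EuclideanSpace ℝ (Fin N))} (ha : ContinuousOn a s)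
    (ht₀ : 0 < t₀) :
    ContinuousOn (Function.uncurry (energyDensityDeriv a u B K lam t₀)) (s ×ˢ Set.Ici 0) := by
  have hut₁ := contDiff_dt hu one_add_one_eq_two.le
  have hux₁ := fun i => contDiff_dx hu one_add_one_eq_two.le i
  have hu₀ := hu.continuous.continuousOn (s := s ×ˢ Set.Ici 0)
  have hut := hut₁.continuous.continuousOn (s := s ×ˢ Set.Ici 0)
  have hutt := (contDiff_dt (m := 0) hut₁ (by simp)).continuous.continuousOn (s := s ×ˢ Set.Ici 0)
  have hgradt := (continuous_finsetSum Finset.univ fun i _ => ((hux₁ i).continuous.const_mul 2).mul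
    (contDiff_dt (m := 0) (hux₁ i) (by simp)).continuous).continuousOn (s := s ×ˢ Set.Ici 0)
  have hform := continuousOn_energyDensity (K := K) (lam := lam) hu hB ha ht₀
  have hΨ := continuousOn_expWeight (lam := lam) hB ht₀ s
  have hT : ∀ p ∈ s ×ˢ Set.Ici (0 : ℝ), t₀ + p.2 ≠ 0 :=
    fun p hp => (add_pos_of_pos_of_nonneg ht₀ hp.2).ne'
  have hT₂ : ∀ p ∈ s ×ˢ Set.Ici (0 : ℝ), (t₀ + p.2) ^ 2 ≠ 0 := fun p hp => pow_ne_zero 2 (hT p hp)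
  simp only [Function.uncurry_def, energyDensity, energyDensityDeriv, ← mul_assoc] at *
  fun_prop (disch := first | exact Set.mapsTo_fst_prod | assumption)

lemma contDiff_energyFlux (hu : ContDiff ℝ 2 (Function.uncurry u)) (hB : ContDiff ℝ 2 B)
    (i : Fin N) (t : ℝ) : ContDiff ℝ 1 (fun x => energyFlux u B K lam t₀ i x t) := by
  have hu₀ := contDiff_slice (hu.of_le one_le_two) t
  have hut := contDiff_slice (contDiff_dt hu one_add_one_eq_two.le) t
  have hux := contDiff_slice (contDiff_dx hu one_add_one_eq_two.le i) t
  have : ContDiff ℝ 1 (fun x => fderiv ℝ B x (EuclideanSpace.single i 1)) :=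
    (hB.fderiv_right one_add_one_eq_two.le).clm_apply contDiff_const
  have hΨ := contDiff_expWeight (lam := lam) (t₀ := t₀) (hB.of_le one_le_two) t
  unfold energyFlux
  fun_prop

lemma dx_energyFlux (hu : ContDiff ℝ 2 (Function.uncurry u)) (hB : ContDiff ℝ 2 B)
    (i : Fin N) (x : EuclideanSpace ℝ (Fin N)) (t : ℝ) :
    dx (energyFlux u B K lam t₀ i) i x t =
      ((2 * K * dx (dt u) i x t + 2 * dx u i x t) * dx u i x t
        + (2 * K * dt u x t + 2 * u x t) * dx (dx u i) i x t
        + (2 * K * dt u x t + 4 * u x t) * (dx u i x t *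
            fderiv ℝ B x (EuclideanSpace.single i 1)) / (t₀ + t)
        + u x t ^ 2 * fderiv ℝ (fun z => fderiv ℝ B z (EuclideanSpace.single i 1)) x
            (EuclideanSpace.single i 1) / (t₀ + t)
        + u x t ^ 2 * fderiv ℝ B x (EuclideanSpace.single i 1) ^ 2 / (t₀ + t) ^ 2)
        * expWeight B lam t₀ x t := by
  have hu₀ := hasLineDerivAt_dx (hu.of_le one_le_two) i x t
  have hut := hasLineDerivAt_dx (contDiff_dt hu one_add_one_eq_two.le) i x t
  have hux := hasLineDerivAt_dx (contDiff_dx hu one_add_one_eq_two.le i) i x t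
  have hBx := (hB.differentiable two_ne_zero x).hasFDerivAt.hasLineDerivAt
    (EuclideanSpace.single i 1)
  have hBi : ContDiff ℝ 1 (fun z => fderiv ℝ B z (EuclideanSpace.single i 1)) :=
    (hB.fderiv_right one_add_one_eq_two.le).clm_apply contDiff_const
  have hBxx := (hBi.differentiable one_ne_zero x).hasFDerivAt.hasLineDerivAt
    (EuclideanSpace.single i 1)
  unfold HasLineDerivAt at *
  have hΨ := ((hBx.div_const (t₀ + t)).exp).const_mul ((t₀ + t) ^ lam)
  have hflux : HasLineDerivAt ℝ (fun y => energyFlux u B K lam t₀ i y t) _ x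
      (EuclideanSpace.single i 1) :=
    ((((hut.const_mul (2 * K)).add (hu₀.const_mul 2)).mul hux).add
      ((hu₀.pow 2).mul (hBxx.div_const (t₀ + t)))).mul hΨ
  have hdiff := (contDiff_energyFlux (K := K) (lam := lam) (t₀ := t₀) hu hB i t).differentiable
    one_ne_zero x
  rw [dx, ← hdiff.lineDeriv_eq_fderiv, hflux.lineDeriv]
  simp only [zero_smul, add_zero, Pi.add_apply, Nat.cast_ofNat, Nat.add_one_sub_one, pow_one,
    Pi.pow_apply, expWeight, Pi.mul_apply]
  generalize t₀ + t = T
  ring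

lemma IsDampedWaveSolution.isDensityWithFlux_energyDensity (hu : IsDampedWaveSolution 2 Ω a R₀ u)
    (ha : ContinuousOn a (closure Ω)) (hB : ContDiff ℝ 2 B) (ht₀ : 0 < t₀) :
    IsDensityWithFlux Ω R₀ (energyDensity a u B K lam t₀) (energyDensityDeriv a u B K lam t₀)
      (energyFlux u B K lam t₀) where
  continuousOn := continuousOn_energyDensity hu.contDiff hB.continuous ha ht₀
  continuousOn_deriv := continuousOn_energyDensityDeriv hu.contDiff hB.continuous ha ht₀
  hasDerivAt x _ t ht := hasDerivAt_energyDensity hu.contDiff ht₀ x ht.le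
  eq_zero_of_lt_norm x t ht hx := by
    simp [energyDensity, hu.eq_zero_of_lt_norm ht hx, hu.dt_eq_zero_of_lt_norm ht hx,
      hu.dx_eq_zero_of_lt_norm _ ht hx]
  contDiff_flux i t _ := contDiff_energyFlux hu.contDiff hB i t
  flux_eq_zero_of_lt_norm i x t ht hx := by
    simp [energyFlux, hu.eq_zero_of_lt_norm ht.le hx, hu.dx_eq_zero_of_lt_norm _ ht.le hx]
  flux_eq_zero_of_mem_frontier i x hx t ht := by
    simp [energyFlux, hu.eq_zero_of_mem_frontier hx ht, hu.dt_eq_zero_of_mem_frontier hx ht]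

end WeightedEnergy

section EnergyProduction

/-- The quadratic form in `(u, X, ∇u)` governing the production of the weighted energy, where
`X = uₜ`, `S = |∇u|²` and, with `T = t₀ + t`, `p = ∇u·∇B/T`, `d = |∇B|²/T²`, `l = ΔB/T`,
`β = B/T²` and `μ = λ/T`. -/
def energyProduction (K a μ u X S p d l β : ℝ) : ℝ :=
  -2 * K * a * X ^ 2 + 2 * X ^ 2 - 2 * K * X * p - 2 * S - 4 * u * p - u ^ 2 * (l + d)
    + (K * (X ^ 2 + S) + 2 * (u * X) + a * u ^ 2) * (μ - β)

variable {K a μ ν κ C u X S p d l β : ℝ}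

lemma le_add_of_sq_le_four_mul {x y z : ℝ} (hx : 0 ≤ x) (hy : 0 ≤ y) (h : z ^ 2 ≤ 4 * (x * y)) :
    z ≤ x + y :=
  (abs_le_of_sq_le_sq' (by nlinarith [sq_nonneg (x - y)]) (add_nonneg hx hy)).2

lemma cross_time_space_le (hK : 0 ≤ K) (ha : 0 < a) (hS : 0 ≤ S) (hβ : 0 ≤ β)
    (hp : p ^ 2 ≤ S * (a * β)) : -2 * K * X * p ≤ K * a * X ^ 2 + K * β * S := by
  refine le_add_of_sq_le_four_mul (by positivity) (by positivity) ?_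
  calc (-2 * K * X * p) ^ 2 = 4 * K ^ 2 * X ^ 2 * p ^ 2 := by ring
    _ ≤ 4 * K ^ 2 * X ^ 2 * (S * (a * β)) := by gcongr
    _ = 4 * (K * a * X ^ 2 * (K * β * S)) := by ring

lemma cross_value_space_le (hκ : 0 < κ) (hκ1 : κ < 1) (hS : 0 ≤ S) (hd₀ : 0 ≤ d)
    (hp : p ^ 2 ≤ S * d) (haβ : 0 ≤ a * β) (hd : d ≤ (1 - κ) * (a * β)) :
    -4 * u * p ≤ (2 - κ / 2) * S + u ^ 2 * (d + (1 - κ / 2) * (a * β)) := by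
  have hd' : d ≤ (1 - κ / 4) * ((d + (1 - κ / 2) * (a * β)) / 2) := by
    nlinarith [mul_nonneg (sq_nonneg κ) haβ, mul_nonneg hκ.le haβ, mul_nonneg hκ.le hd₀]
  refine le_add_of_sq_le_four_mul (mul_nonneg (by linarith) hS)
    (mul_nonneg (sq_nonneg u) (add_nonneg hd₀ (mul_nonneg (by linarith) haβ))) ?_
  calc (-4 * u * p) ^ 2 = 16 * u ^ 2 * p ^ 2 := by ring
    _ ≤ 16 * u ^ 2 * (S * ((1 - κ / 4) * ((d + (1 - κ / 2) * (a * β)) / 2))) := by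
      gcongr
      exact hp.trans (by gcongr)
    _ = _ := by ring

lemma cross_value_time_le (hν : 0 < ν) :
    2 * (u * X) * μ ≤ ν * u ^ 2 + μ ^ 2 / ν * X ^ 2 := by
  refine le_add_of_sq_le_four_mul (by positivity) (by positivity) (le_of_eq ?_)
  field_simp
  ring

lemma neg_cross_value_time_le (ha : 0 < a) (hκ : 0 < κ) (hβ : 0 ≤ β) (hβC : β ≤ C * a) :
    -2 * (u * X) * β ≤ κ / 2 * (a * β) * u ^ 2 + 2 * C / κ * X ^ 2 := by
  have hC : 0 ≤ C := nonneg_of_mul_nonneg_left (hβ.trans hβC) ha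
  refine le_add_of_sq_le_four_mul (by positivity) (by positivity) ?_
  calc (-2 * (u * X) * β) ^ 2 = 4 * u ^ 2 * X ^ 2 * β * β := by ring
    _ ≤ 4 * u ^ 2 * X ^ 2 * β * (C * a) := by gcongr
    _ = 4 * (κ / 2 * (a * β) * u ^ 2 * (2 * C / κ * X ^ 2)) := by field_simp

lemma energyProduction_nonpos (ha : 0 < a) (hK : 0 ≤ K) (hκ : 0 < κ) (hκ1 : κ < 1) (hν : 0 < ν)
    (hS : 0 ≤ S) (hd₀ : 0 ≤ d) (hp : p ^ 2 ≤ S * d) (hβ : 0 ≤ β) (hβC : β ≤ C * a)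
    (hd : d ≤ (1 - κ) * (a * β)) (hl : a * μ + ν ≤ l)
    (hKa : 2 + K * μ + μ ^ 2 / ν + 2 * C / κ ≤ K * a) (hKμ : K * μ ≤ κ / 2) :
    energyProduction K a μ u X S p d l β ≤ 0 := by
  have haβ : 0 ≤ a * β := mul_nonneg ha.le hβ
  have hdβ : d ≤ a * β := hd.trans (mul_le_of_le_one_left haβ (by linarith))
  have hXp := cross_time_space_le (X := X) hK ha hS hβ
    (hp.trans (mul_le_mul_of_nonneg_left hdβ hS))
  have hup := cross_value_space_le (u := u) hκ hκ1 hS hd₀ hp haβ hd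
  have huμ := cross_value_time_le (u := u) (X := X) (μ := μ) hν
  have huβ := neg_cross_value_time_le (u := u) (X := X) ha hκ hβ hβC
  have hXX := mul_le_mul_of_nonneg_right hKa (sq_nonneg X)
  have hSS := mul_le_mul_of_nonneg_right hKμ hS
  have huu := mul_le_mul_of_nonneg_right hl (sq_nonneg u)
  have hXβ : 0 ≤ K * β * X ^ 2 := by positivity
  rw [energyProduction]
  linarith

variable {N : ℕ} {Ω : Set (EuclideanSpace ℝ (Fin N))} {a B : EuclideanSpace ℝ (Fin N) → ℝ}
  {u : EuclideanSpace ℝ (Fin N) → ℝ → ℝ} {R₀ K lam t₀ : ℝ}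

lemma sum_dx_energyFlux (hu : ContDiff ℝ 2 (Function.uncurry u)) (hB : ContDiff ℝ 2 B)
    (x : EuclideanSpace ℝ (Fin N)) (t : ℝ) :
    ∑ i, dx (energyFlux u B K lam t₀ i) i x t =
      (2 * K * ∑ i, dx u i x t * dx (dt u) i x t + 2 * ∑ i, dx u i x t ^ 2
        + (2 * K * dt u x t + 2 * u x t) * ∑ i, dx (dx u i) i x t
        + (2 * K * dt u x t + 4 * u x t) * (∑ i, dx u i x t *
            fderiv ℝ B x (EuclideanSpace.single i 1)) / (t₀ + t)
        + u x t ^ 2 * lap B x / (t₀ + t)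
        + u x t ^ 2 * (∑ i, fderiv ℝ B x (EuclideanSpace.single i 1) ^ 2) / (t₀ + t) ^ 2)
        * expWeight B lam t₀ x t := by
  simp only [dx_energyFlux hu hB, lap, Finset.mul_sum, Finset.sum_div, ← Finset.sum_add_distrib,
    Finset.sum_mul]
  exact Finset.sum_congr rfl fun i _ => by ring

lemma energyDensityDeriv_sub_sum_dx_energyFlux (hu : IsDampedWaveSolution 2 Ω a R₀ u)
    (hB : ContDiff ℝ 2 B) {x : EuclideanSpace ℝ (Fin N)} (hx : x ∈ Ω) {t : ℝ}
    (ht : 0 < t) :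
    energyDensityDeriv a u B K lam t₀ x t - ∑ i, dx (energyFlux u B K lam t₀ i) i x t =
      energyProduction K (a x) (lam / (t₀ + t)) (u x t) (dt u x t) (∑ i, dx u i x t ^ 2)
        ((∑ i, dx u i x t * fderiv ℝ B x (EuclideanSpace.single i 1)) / (t₀ + t))
        ((∑ i, fderiv ℝ B x (EuclideanSpace.single i 1) ^ 2) / (t₀ + t) ^ 2)
        (lap B x / (t₀ + t)) (B x / (t₀ + t) ^ 2) * expWeight B lam t₀ x t := by
  simp only [sum_dx_energyFlux hu.contDiff hB, energyDensityDeriv, hu.dt_dt_eq hx ht,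
    dt_dx_comm hu.contDiff, energyProduction, mul_assoc (2 : ℝ), ← Finset.mul_sum]
  ring

end EnergyProduction

section BoundsOnClosedSets

variable {X : Type*} [TopologicalSpace X] {S : Set X} {f g : X → ℝ}

lemma exists_forall_le_add_of_eventually_le (hS : IsClosed S) (hf : ContinuousOn f S)
    (hg : ∀ x ∈ S, 0 ≤ g x) (hfg : ∀ᶠ x in cocompact X, f x ≤ g x) :
    ∃ M ≥ 0, ∀ x ∈ S, f x ≤ g x + M := by
  obtain ⟨K, hK, hKfg⟩ := mem_cocompact.1 hfg
  obtain ⟨M, hM⟩ := (hK.inter_left hS).exists_bound_of_continuousOn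
    (hf.mono Set.inter_subset_left)
  refine ⟨max M 0, le_max_right _ _, fun x hx => ?_⟩
  by_cases hxK : x ∈ K
  · linarith [hg x hx, le_abs_self (f x), (hM x ⟨hx, hxK⟩).trans (le_max_left M 0),
      Real.norm_eq_abs (f x)]
  · exact le_add_of_le_of_nonneg (hKfg hxK) (le_max_right _ _)

lemma exists_pos_forall_le_of_tendsto (hS : IsClosed S) (hf : ContinuousOn f S)
    (hpos : ∀ x ∈ S, 0 < f x) {l : ℝ} (hl : 0 < l) (hlim : Tendsto f (cocompact X) (nhds l)) :
    ∃ r > 0, ∀ x ∈ S, r ≤ f x := by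
  have hev : ∀ᶠ x in cocompact X, (f x)⁻¹ ≤ 2 * l⁻¹ :=
    ((hlim.inv₀ hl.ne').eventually_lt_const (by linarith [inv_pos.2 hl])).mono fun _ => le_of_lt
  obtain ⟨M, hM, hfM⟩ := exists_forall_le_add_of_eventually_le hS
    (hf.inv₀ fun x hx => (hpos x hx).ne') (fun _ _ => by positivity) hev
  exact ⟨(2 * l⁻¹ + M)⁻¹, by positivity, fun x hx =>
    inv_le_of_inv_le₀ (hpos x hx) (hfM x hx)⟩

end BoundsOnClosedSets

section RadialWeight

variable {N : ℕ} {α c L M : ℝ}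

/-- The radial weight `c (1 + |x|²)^(1 + α/2) + L (1 + |x|²) + M`. -/
def radialWeight (α c L M : ℝ) (x : EuclideanSpace ℝ (Fin N)) : ℝ :=
  c * (1 + ‖x‖ ^ 2) ^ (1 + α / 2) + L * (1 + ‖x‖ ^ 2) + M

lemma contDiff_one_add_norm_sq_rpow (r : ℝ) {n : WithTop ℕ∞} :
    ContDiff ℝ n (fun x : EuclideanSpace ℝ (Fin N) => (1 + ‖x‖ ^ 2) ^ r) :=
  (contDiff_const.add (contDiff_norm_sq ℝ)).rpow_const_of_ne fun x => by positivity

lemma contDiff_radialWeight {n : WithTop ℕ∞} :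
    ContDiff ℝ n (radialWeight α c L M : EuclideanSpace ℝ (Fin N) → ℝ) :=
  ((contDiff_const.mul (contDiff_one_add_norm_sq_rpow _)).add
    (contDiff_const.mul (contDiff_const.add (contDiff_norm_sq ℝ)))).add contDiff_const

lemma radialWeight_zero_zero (x : EuclideanSpace ℝ (Fin N)) :
    radialWeight α c 0 0 x = c * ((1 + ‖x‖ ^ 2) * (1 + ‖x‖ ^ 2) ^ (α / 2)) := by
  rw [radialWeight, Real.rpow_add (by positivity), Real.rpow_one]
  ring

lemma radialWeight_eq_add (x : EuclideanSpace ℝ (Fin N)) :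
    radialWeight α c L M x = radialWeight α c 0 0 x + L * (1 + ‖x‖ ^ 2) + M := by
  simp only [radialWeight]
  ring

lemma hasLineDerivAt_one_add_norm_sq (x : EuclideanSpace ℝ (Fin N)) (i : Fin N) :
    HasLineDerivAt ℝ (fun x => 1 + ‖x‖ ^ 2) (2 * x i) x (EuclideanSpace.single i 1) := by
  have h := ((hasStrictFDerivAt_norm_sq x).hasFDerivAt.const_add 1).hasLineDerivAt
    (EuclideanSpace.single i (1 : ℝ))
  simpa [EuclideanSpace.inner_single_right] using h

lemma hasLineDerivAt_one_add_norm_sq_rpow (r : ℝ) (x : EuclideanSpace ℝ (Fin N)) (i : Fin N) :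
    HasLineDerivAt ℝ (fun x => (1 + ‖x‖ ^ 2) ^ r) (2 * x i * r * (1 + ‖x‖ ^ 2) ^ (r - 1)) x
      (EuclideanSpace.single i 1) := by
  have h := HasDerivAt.rpow_const (p := r) (hasLineDerivAt_one_add_norm_sq x i)
    (Or.inl (by positivity))
  simpa [HasLineDerivAt] using h

lemma fderiv_radialWeight_single (x : EuclideanSpace ℝ (Fin N)) (i : Fin N) :
    fderiv ℝ (radialWeight α c L M) x (EuclideanSpace.single i 1) =
      (c * (1 + α / 2) * (1 + ‖x‖ ^ 2) ^ (α / 2) + L) * (2 * x i) := by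
  have hline : HasLineDerivAt ℝ (radialWeight α c L M) _ x (EuclideanSpace.single i 1) :=
    (((hasLineDerivAt_one_add_norm_sq_rpow (1 + α / 2) x i).const_mul c).add
      ((hasLineDerivAt_one_add_norm_sq x i).const_mul L)).add_const M
  rw [← ((contDiff_radialWeight (n := 1)).differentiable one_ne_zero x).lineDeriv_eq_fderiv,
    hline.lineDeriv, add_sub_cancel_left]
  ring

lemma sum_sq_fderiv_radialWeight (x : EuclideanSpace ℝ (Fin N)) :
    ∑ i, fderiv ℝ (radialWeight α c L M) x (EuclideanSpace.single i 1) ^ 2 =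
      4 * (c * (1 + α / 2) * (1 + ‖x‖ ^ 2) ^ (α / 2) + L) ^ 2 * ‖x‖ ^ 2 := by
  simp only [fderiv_radialWeight_single, mul_pow]
  rw [← Finset.mul_sum, ← Finset.mul_sum, ← EuclideanSpace.real_norm_sq_eq]
  ring

lemma fderiv_fderiv_radialWeight_single (x : EuclideanSpace ℝ (Fin N)) (i : Fin N) :
    fderiv ℝ (fun z => fderiv ℝ (radialWeight α c L M) z (EuclideanSpace.single i 1)) x
        (EuclideanSpace.single i 1) =
      2 * (c * (1 + α / 2) * (1 + ‖x‖ ^ 2) ^ (α / 2) + L)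
        + 2 * c * (1 + α / 2) * α * (1 + ‖x‖ ^ 2) ^ (α / 2 - 1) * x i ^ 2 := by
  have hcoord : HasLineDerivAt ℝ (fun z : EuclideanSpace ℝ (Fin N) => z i) 1 x
      (EuclideanSpace.single i 1) := by
    simpa using (EuclideanSpace.proj (𝕜 := ℝ) i).hasFDerivAt.hasLineDerivAt
      (x := x) (EuclideanSpace.single i 1)
  have hline : HasLineDerivAt ℝ (fun z : EuclideanSpace ℝ (Fin N) =>
      (c * (1 + α / 2) * (1 + ‖z‖ ^ 2) ^ (α / 2) + L) * (2 * z i)) _ x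
      (EuclideanSpace.single i 1) :=
    (((hasLineDerivAt_one_add_norm_sq_rpow (α / 2) x i).const_mul (c * (1 + α / 2))).add_const
      L).mul (hcoord.const_mul 2)
  have hdiff : Differentiable ℝ fun z : EuclideanSpace ℝ (Fin N) =>
      (c * (1 + α / 2) * (1 + ‖z‖ ^ 2) ^ (α / 2) + L) * (2 * z i) := by
    have := (contDiff_one_add_norm_sq_rpow (N := N) (α / 2)).differentiable one_ne_zero
    fun_prop
  simp only [fderiv_radialWeight_single]
  rw [← (hdiff x).lineDeriv_eq_fderiv, hline.lineDeriv]
  simp only [zero_smul, add_zero]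
  ring

lemma lap_radialWeight (x : EuclideanSpace ℝ (Fin N)) :
    lap (radialWeight α c L M) x =
      2 * N * (c * (1 + α / 2) * (1 + ‖x‖ ^ 2) ^ (α / 2) + L)
        + 2 * c * (1 + α / 2) * α * (1 + ‖x‖ ^ 2) ^ (α / 2 - 1) * ‖x‖ ^ 2 := by
  simp only [lap, fderiv_fderiv_radialWeight_single, Finset.sum_add_distrib, Finset.sum_const,
    Finset.card_univ, Fintype.card_fin, nsmul_eq_mul]
  rw [← Finset.mul_sum, ← EuclideanSpace.real_norm_sq_eq]
  ring

end RadialWeight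

section AdmissibleWeight

variable {N : ℕ} {α a₀ lam κ c L : ℝ} {Ω : Set (EuclideanSpace ℝ (Fin N))}
  {a : EuclideanSpace ℝ (Fin N) → ℝ}

lemma tendsto_one_add_norm_sq_atTop :
    Tendsto (fun x : EuclideanSpace ℝ (Fin N) => 1 + ‖x‖ ^ 2) (cocompact _) atTop :=
  tendsto_atTop_add_const_left _ _
    ((tendsto_pow_atTop two_ne_zero).comp tendsto_norm_cocompact_atTop)

lemma tendsto_norm_sq_div_one_add_norm_sq :
    Tendsto (fun x : EuclideanSpace ℝ (Fin N) => ‖x‖ ^ 2 / (1 + ‖x‖ ^ 2)) (cocompact _)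
      (nhds 1) := by
  have h := (tendsto_inv_atTop_zero.comp (tendsto_one_add_norm_sq_atTop (N := N))).const_sub 1
  rw [sub_zero] at h
  refine h.congr fun x => ?_
  simp only [Function.comp_apply]
  field_simp
  ring

lemma tendsto_one_add_norm_sq_rpow_inv (hα : 0 < α) :
    Tendsto (fun x : EuclideanSpace ℝ (Fin N) => ((1 + ‖x‖ ^ 2) ^ (α / 2))⁻¹) (cocompact _)
      (nhds 0) :=
  tendsto_inv_atTop_zero.comp
    ((tendsto_rpow_atTop (half_pos hα)).comp tendsto_one_add_norm_sq_atTop)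

lemma tendsto_div_one_add_norm_sq_rpow
    (halim : Tendsto (fun x : EuclideanSpace ℝ (Fin N) => ‖x‖ ^ (-α) * a x) (cocompact _)
      (nhds a₀)) :
    Tendsto (fun x => a x / (1 + ‖x‖ ^ 2) ^ (α / 2)) (cocompact _) (nhds a₀) := by
  have hratio := (tendsto_norm_sq_div_one_add_norm_sq (N := N)).rpow_const (p := α / 2)
    (Or.inl one_ne_zero)
  have h := halim.mul hratio
  rw [Real.one_rpow, mul_one] at h
  refine h.congr' ?_
  filter_upwards [tendsto_norm_cocompact_atTop.eventually_gt_atTop 0] with x hx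
  have hsq : (‖x‖ ^ 2) ^ (α / 2) = ‖x‖ ^ α := by
    rw [← Real.rpow_natCast_mul (norm_nonneg x)]
    congr 1
    push_cast
    ring
  rw [Real.div_rpow (by positivity) (by positivity), hsq, Real.rpow_neg hx.le]
  field_simp

lemma exists_pos_mul_rpow_le (ha : ContinuousOn a (closure Ω))
    (hapos : ∀ x ∈ closure Ω, 0 < a x) (ha₀ : 0 < a₀)
    (halim : Tendsto (fun x : EuclideanSpace ℝ (Fin N) => ‖x‖ ^ (-α) * a x) (cocompact _)
      (nhds a₀)) :
    ∃ r > (0 : ℝ), ∀ x ∈ closure Ω, r * (1 + ‖x‖ ^ 2) ^ (α / 2) ≤ a x := by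
  obtain ⟨r, hr, hra⟩ := exists_pos_forall_le_of_tendsto isClosed_closure
    (ha.div (contDiff_one_add_norm_sq_rpow (n := 0) (α / 2)).continuous.continuousOn
      fun x _ => by positivity)
    (fun x hx => div_pos (hapos x hx) (by positivity)) ha₀ (tendsto_div_one_add_norm_sq_rpow halim)
  exact ⟨r, hr, fun x hx => (le_div_iff₀ (by positivity)).1 (hra x hx)⟩

lemma exists_pos_le (hα : 0 < α) (ha : ContinuousOn a (closure Ω))
    (hapos : ∀ x ∈ closure Ω, 0 < a x) (ha₀ : 0 < a₀)
    (halim : Tendsto (fun x : EuclideanSpace ℝ (Fin N) => ‖x‖ ^ (-α) * a x) (cocompact _)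
      (nhds a₀)) :
    ∃ r > (0 : ℝ), ∀ x ∈ closure Ω, r ≤ a x := by
  obtain ⟨r, hr, hra⟩ := exists_pos_mul_rpow_le ha hapos ha₀ halim
  exact ⟨r, hr, fun x hx => (le_mul_of_one_le_right hr.le (Real.one_le_rpow
    (le_add_of_nonneg_right (sq_nonneg ‖x‖)) (by positivity))).trans (hra x hx)⟩

lemma tendsto_lap_radialWeight_div :
    Tendsto (fun x : EuclideanSpace ℝ (Fin N) =>
      lap (radialWeight α c 0 0) x / (1 + ‖x‖ ^ 2) ^ (α / 2)) (cocompact _)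
      (nhds (c * (2 + α) * (N + α))) := by
  have h := ((tendsto_norm_sq_div_one_add_norm_sq (N := N)).const_mul (c * (2 + α) * α)).const_add
    (c * (2 + α) * N)
  rw [show c * (2 + α) * N + c * (2 + α) * α * 1 = c * (2 + α) * (N + α) by ring] at h
  refine h.congr fun x => ?_
  rw [lap_radialWeight, Real.rpow_sub_one (by positivity)]
  field_simp
  ring

lemma tendsto_sum_sq_fderiv_radialWeight_div (hα : 0 < α) :
    Tendsto (fun x : EuclideanSpace ℝ (Fin N) =>
      (∑ i, fderiv ℝ (radialWeight α c L 0) x (EuclideanSpace.single i 1) ^ 2)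
        / ((1 + ‖x‖ ^ 2) ^ (α / 2)) ^ 2 / (1 + ‖x‖ ^ 2)) (cocompact _)
      (nhds ((c * (2 + α)) ^ 2)) := by
  have h := ((((tendsto_one_add_norm_sq_rpow_inv (N := N) hα).const_mul (2 * L)).const_add
    (c * (2 + α))).pow 2).mul tendsto_norm_sq_div_one_add_norm_sq
  rw [mul_zero, add_zero, mul_one] at h
  refine h.congr fun x => ?_
  rw [sum_sq_fderiv_radialWeight]
  field_simp
  ring

lemma eventually_le_lap_radialWeight (hlim : Tendsto (fun x : EuclideanSpace ℝ (Fin N) =>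
      a x / (1 + ‖x‖ ^ 2) ^ (α / 2)) (cocompact _) (nhds a₀))
    (hc : (lam + κ) * a₀ < c * (2 + α) * (N + α)) :
    ∀ᶠ x in cocompact _, (lam + κ) * a x ≤ lap (radialWeight α c 0 0) x := by
  filter_upwards [(hlim.const_mul (lam + κ)).eventually_lt tendsto_lap_radialWeight_div hc]
    with x hx
  rw [← mul_div_assoc] at hx
  exact ((div_lt_div_iff_of_pos_right (by positivity)).1 hx).le

lemma eventually_sum_sq_fderiv_radialWeight_le (hα : 0 < α)
    (hlim : Tendsto (fun x : EuclideanSpace ℝ (Fin N) => a x / (1 + ‖x‖ ^ 2) ^ (α / 2))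
      (cocompact _) (nhds a₀))
    (hc₀ : 0 < c) (hc : c * (2 + α) ^ 2 < (1 - κ) * a₀) :
    ∀ᶠ x in cocompact _,
      ∑ i, fderiv ℝ (radialWeight α c L 0) x (EuclideanSpace.single i 1) ^ 2 ≤
        (1 - κ) * (a x * radialWeight α c 0 0 x) := by
  have hlt : (c * (2 + α)) ^ 2 < (1 - κ) * c * a₀ := by nlinarith
  filter_upwards [(tendsto_sum_sq_fderiv_radialWeight_div hα).eventually_lt
    (hlim.const_mul ((1 - κ) * c)) hlt] with x hx
  rw [radialWeight_zero_zero]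
  rw [div_div, div_lt_iff₀ (by positivity)] at hx
  refine hx.le.trans_eq ?_
  field_simp

lemma exists_radialWeight_constants (hα : 0 < α) (ha₀ : 0 < a₀) (hlam : 0 ≤ lam)
    (hlam' : lam < (N + α) / (2 + α)) :
    ∃ c > 0, ∃ κ > 0, κ < 1 ∧ (lam + κ) * a₀ < c * (2 + α) * (N + α) ∧
      c * (2 + α) ^ 2 < (1 - κ) * a₀ := by
  have hD : lam * a₀ / ((2 + α) * (N + α)) < a₀ / (2 + α) ^ 2 := by
    rw [lt_div_iff₀ (by positivity)] at hlam'
    rw [div_lt_div_iff₀ (by positivity) (by positivity)]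
    have : a₀ * (2 + α) * (lam * (2 + α)) < a₀ * (2 + α) * (N + α) := by gcongr
    linarith
  obtain ⟨c, hc1, hc2⟩ := exists_between hD
  have hc : 0 < c := lt_of_le_of_lt (by positivity) hc1
  rw [div_lt_iff₀ (by positivity)] at hc1
  rw [lt_div_iff₀ (by positivity)] at hc2
  obtain ⟨ε, hε, hεlt⟩ := exists_between (lt_min (sub_pos.2 hc1) (sub_pos.2 hc2))
  obtain ⟨hε1, hε2⟩ := lt_min_iff.1 hεlt
  have hκ : ε / a₀ * a₀ = ε := div_mul_cancel₀ _ ha₀.ne'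
  have hpos : 0 < c * (2 + α) ^ 2 := by positivity
  exact ⟨c, hc, ε / a₀, div_pos hε ha₀, (div_lt_one ha₀).2 (by linarith), by linarith, by linarith⟩

/-- A weight `B` for which the energy with density
`(t₀ + t)^λ exp(B/(t₀ + t)) (K(uₜ² + |∇u|²) + 2uuₜ + au²)` is nonincreasing for suitable `K` and
`t₀`: an approximate solution of `ΔB = (λ + κ)a`, `|∇B|² = (1 - κ)aB`. -/
structure IsAdmissibleWeight (Ω : Set (EuclideanSpace ℝ (Fin N)))
    (a : EuclideanSpace ℝ (Fin N) → ℝ) (lam κ C : ℝ) (B : EuclideanSpace ℝ (Fin N) → ℝ) :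
    Prop where
  contDiff : ContDiff ℝ 2 B
  nonneg : ∀ x ∈ closure Ω, 0 ≤ B x
  le_mul : ∀ x ∈ closure Ω, B x ≤ C * a x * (1 + ‖x‖ ^ 2)
  sum_sq_fderiv_le : ∀ x ∈ closure Ω,
    ∑ i, fderiv ℝ B x (EuclideanSpace.single i 1) ^ 2 ≤ (1 - κ) * (a x * B x)
  le_lap : ∀ x ∈ closure Ω, (lam + κ) * a x ≤ lap B x

lemma radialWeight_le_mul {M r : ℝ} {x : EuclideanSpace ℝ (Fin N)} (hα : 0 < α) (hL : 0 ≤ L)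
    (hM : 0 ≤ M) (hr : 0 < r) (hc : 0 < c) (hra : r * (1 + ‖x‖ ^ 2) ^ (α / 2) ≤ a x) :
    radialWeight α c L M x ≤ (c + L + M) / r * a x * (1 + ‖x‖ ^ 2) := by
  have hs : 1 ≤ 1 + ‖x‖ ^ 2 := le_add_of_nonneg_right (sq_nonneg _)
  have hle : 1 + ‖x‖ ^ 2 ≤ (1 + ‖x‖ ^ 2) * (1 + ‖x‖ ^ 2) ^ (α / 2) :=
    le_mul_of_one_le_right (by positivity) (Real.one_le_rpow hs (by positivity))
  calc radialWeight α c L M x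
      = c * ((1 + ‖x‖ ^ 2) * (1 + ‖x‖ ^ 2) ^ (α / 2)) + L * (1 + ‖x‖ ^ 2) + M * 1 := by
        rw [radialWeight_eq_add, radialWeight_zero_zero, mul_one]
    _ ≤ c * ((1 + ‖x‖ ^ 2) * (1 + ‖x‖ ^ 2) ^ (α / 2))
          + L * ((1 + ‖x‖ ^ 2) * (1 + ‖x‖ ^ 2) ^ (α / 2))
          + M * ((1 + ‖x‖ ^ 2) * (1 + ‖x‖ ^ 2) ^ (α / 2)) := by
        gcongr
        exact hs.trans hle
    _ = (c + L + M) / r * (r * (1 + ‖x‖ ^ 2) ^ (α / 2)) * (1 + ‖x‖ ^ 2) := by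
        field_simp
    _ ≤ (c + L + M) / r * a x * (1 + ‖x‖ ^ 2) := by gcongr

lemma exists_le_lap_radialWeight (hα : 0 < α) (hN : 0 < N) (hc : 0 ≤ c)
    (ha : ContinuousOn a (closure Ω))
    (hlap : ∀ᶠ x in cocompact _, (lam + κ) * a x ≤ lap (radialWeight α c 0 0) x) :
    ∃ L ≥ 0, ∀ M, ∀ x ∈ closure Ω, (lam + κ) * a x ≤ lap (radialWeight α c L M) x := by
  obtain ⟨M₁, hM₁, hM₁a⟩ := exists_forall_le_add_of_eventually_le (X := EuclideanSpace ℝ (Fin N))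
    isClosed_closure (ha.const_smul (lam + κ)) (fun x _ => by rw [lap_radialWeight]; positivity)
    hlap
  refine ⟨M₁ / (2 * N), by positivity, fun M x hx => (hM₁a x hx).trans_eq ?_⟩
  rw [lap_radialWeight, lap_radialWeight]
  have : (N : ℝ) ≠ 0 := Nat.cast_ne_zero.2 hN.ne'
  field_simp
  ring

lemma exists_sum_sq_fderiv_radialWeight_le {r : ℝ} (hc : 0 ≤ c) (hL : 0 ≤ L) (hκ : κ < 1)
    (hr : 0 < r) (hra : ∀ x ∈ closure Ω, r ≤ a x)
    (hgrad : ∀ᶠ x in cocompact _,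
      ∑ i, fderiv ℝ (radialWeight α c L 0) x (EuclideanSpace.single i 1) ^ 2 ≤
        (1 - κ) * (a x * radialWeight α c 0 0 x)) :
    ∃ M ≥ 0, ∀ x ∈ closure Ω,
      ∑ i, fderiv ℝ (radialWeight α c L M) x (EuclideanSpace.single i 1) ^ 2 ≤
        (1 - κ) * (a x * radialWeight α c L M x) := by
  have hκ' : 0 < 1 - κ := sub_pos.2 hκ
  have hcont : Continuous fun x : EuclideanSpace ℝ (Fin N) =>
      ∑ i, fderiv ℝ (radialWeight α c L 0) x (EuclideanSpace.single i 1) ^ 2 := by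
    have := (contDiff_one_add_norm_sq_rpow (N := N) (α / 2) (n := 0)).continuous
    simp only [sum_sq_fderiv_radialWeight]
    fun_prop
  obtain ⟨M₂, hM₂, hM₂a⟩ := exists_forall_le_add_of_eventually_le isClosed_closure
    hcont.continuousOn (fun x hx => mul_nonneg hκ'.le (mul_nonneg (hr.le.trans (hra x hx))
      (by rw [radialWeight_zero_zero]; positivity))) hgrad
  refine ⟨M₂ / ((1 - κ) * r), by positivity, fun x hx => ?_⟩
  have hax : 0 ≤ a x := hr.le.trans (hra x hx)
  calc ∑ i, fderiv ℝ (radialWeight α c L (M₂ / ((1 - κ) * r))) x (EuclideanSpace.single i 1) ^ 2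
      = ∑ i, fderiv ℝ (radialWeight α c L 0) x (EuclideanSpace.single i 1) ^ 2 := by
        rw [sum_sq_fderiv_radialWeight, sum_sq_fderiv_radialWeight]
    _ ≤ (1 - κ) * (a x * radialWeight α c 0 0 x) + M₂ := hM₂a x hx
    _ = (1 - κ) * (a x * radialWeight α c 0 0 x + r * (M₂ / ((1 - κ) * r))) := by field_simp
    _ ≤ (1 - κ) * (a x * radialWeight α c 0 0 x + a x * (M₂ / ((1 - κ) * r))) := by
        gcongr
        exact hra x hx
    _ ≤ (1 - κ) * (a x * radialWeight α c L (M₂ / ((1 - κ) * r)) x) := by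
        rw [radialWeight_eq_add (L := L), ← mul_add]
        gcongr
        exact le_add_of_nonneg_right (by positivity)

lemma exists_isAdmissibleWeight (hα : 0 < α) (hN : 0 < N) (ha : ContinuousOn a (closure Ω))
    (hapos : ∀ x ∈ closure Ω, 0 < a x) (ha₀ : 0 < a₀)
    (halim : Tendsto (fun x : EuclideanSpace ℝ (Fin N) => ‖x‖ ^ (-α) * a x) (cocompact _)
      (nhds a₀))
    (hlam : 0 ≤ lam) (hlam' : lam < (N + α) / (2 + α)) :
    ∃ κ > 0, κ < 1 ∧ ∃ C ≥ 0, ∃ B, IsAdmissibleWeight Ω a lam κ C B := by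
  have hlim := tendsto_div_one_add_norm_sq_rpow halim
  obtain ⟨r, hr, hra⟩ := exists_pos_mul_rpow_le ha hapos ha₀ halim
  obtain ⟨r', hr', hra'⟩ := exists_pos_le hα ha hapos ha₀ halim
  obtain ⟨c, hc, κ, hκ, hκ1, hclap, hcgrad⟩ :=
    exists_radialWeight_constants (N := N) hα ha₀ hlam hlam'
  obtain ⟨L, hL, hlap⟩ := exists_le_lap_radialWeight hα hN hc.le ha
    (eventually_le_lap_radialWeight hlim hclap)
  obtain ⟨M, hM, hgrad⟩ := exists_sum_sq_fderiv_radialWeight_le hc.le hL hκ1 hr' hra'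
    (eventually_sum_sq_fderiv_radialWeight_le hα hlim hc hcgrad)
  exact ⟨κ, hκ, hκ1, (c + L + M) / r, by positivity, radialWeight α c L M,
    { contDiff := contDiff_radialWeight
      nonneg := fun x _ => by rw [radialWeight]; positivity
      le_mul := fun x hx => radialWeight_le_mul hα hL hM hr hc (hra x hx)
      sum_sq_fderiv_le := hgrad
      le_lap := hlap M }⟩

end AdmissibleWeight

section WeightedEnergyEstimate

variable {N : ℕ} {lam κ C : ℝ} {Ω : Set (EuclideanSpace ℝ (Fin N))}
  {a B : EuclideanSpace ℝ (Fin N) → ℝ}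

lemma IsAdmissibleWeight.energyProduction_nonpos (hB : IsAdmissibleWeight Ω a lam κ C B)
    (hκ : 0 < κ) (hκ1 : κ < 1) (hC : 0 ≤ C) {r K T : ℝ} (hr : 0 < r)
    (hK : 2 + κ / 2 + lam ^ 2 / (κ * r) + 4 * C / κ ≤ K * r) (hT : 1 ≤ T) (hK₀ : 0 ≤ K)
    (hKT : K * (lam / T) ≤ κ / 2) {x : EuclideanSpace ℝ (Fin N)} (hx : x ∈ closure Ω)
    (hax : r ≤ a x) (hxT : ‖x‖ ≤ T) (u X : ℝ) (ξ : Fin N → ℝ) :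
    energyProduction K (a x) (lam / T) u X (∑ i, ξ i ^ 2)
      ((∑ i, ξ i * fderiv ℝ B x (EuclideanSpace.single i 1)) / T)
      ((∑ i, fderiv ℝ B x (EuclideanSpace.single i 1) ^ 2) / T ^ 2)
      (lap B x / T) (B x / T ^ 2) ≤ 0 := by
  have : 0 < T := one_pos.trans_le hT
  have ha : 0 < a x := hr.trans_le hax
  refine _root_.energyProduction_nonpos (κ := κ) (ν := κ * a x / T) (C := 2 * C) ha hK₀ hκ hκ1
    (by positivity) (by positivity) (by positivity) ?_ (div_nonneg (hB.nonneg x hx) (sq_nonneg T))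
    ?_ ?_ ?_ ?_ hKT
  · rw [div_pow, ← mul_div_assoc]
    gcongr
    exact Finset.sum_mul_sq_le_sq_mul_sq _ _ _
  · have hcone : 1 + ‖x‖ ^ 2 ≤ 2 * T ^ 2 := by nlinarith [norm_nonneg x]
    rw [div_le_iff₀ (by positivity)]
    calc B x ≤ C * a x * (1 + ‖x‖ ^ 2) := hB.le_mul x hx
      _ ≤ C * a x * (2 * T ^ 2) := by gcongr
      _ = 2 * C * a x * T ^ 2 := by ring
  · rw [← mul_div_assoc, ← mul_div_assoc]
    gcongr
    exact hB.sum_sq_fderiv_le x hx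
  · rw [← mul_div_assoc, ← add_div]
    gcongr
    linarith [hB.le_lap x hx]
  · have hν : (lam / T) ^ 2 / (κ * a x / T) + 2 * (2 * C) / κ =
        lam ^ 2 / (κ * (a x * T)) + 4 * C / κ := by
      field_simp
      ring
    have haT : r ≤ a x * T := hax.trans (le_mul_of_one_le_right ha.le hT)
    calc 2 + K * (lam / T) + (lam / T) ^ 2 / (κ * a x / T) + 2 * (2 * C) / κ
        ≤ 2 + κ / 2 + lam ^ 2 / (κ * r) + 4 * C / κ := by
          rw [add_assoc, hν, ← add_assoc]
          gcongr
      _ ≤ K * a x := hK.trans (by gcongr)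

lemma IsAdmissibleWeight.exists_setIntegral_energyDensity_le
    (hB : IsAdmissibleWeight Ω a lam κ C B) (hκ : 0 < κ) (hκ1 : κ < 1) (hC : 0 ≤ C)
    (hΩ : MeasurableSet Ω) (ha : ContinuousOn a (closure Ω)) {r : ℝ} (hr : 0 < r)
    (hra : ∀ x ∈ closure Ω, r ≤ a x) (R₀ : ℝ) :
    ∃ K t₀, 1 ≤ t₀ ∧ 2 ≤ K * r ∧ ∀ u, IsDampedWaveSolution 2 Ω a R₀ u → ∀ t ≥ (0 : ℝ),
      ∫ x in Ω, energyDensity a u B K lam t₀ x t ≤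
        ∫ x in Ω, energyDensity a u B K lam t₀ x 0 := by
  obtain ⟨K, hK₀, hK⟩ : ∃ K ≥ 0, K * r = 2 + κ / 2 + lam ^ 2 / (κ * r) + 4 * C / κ :=
    ⟨(2 + κ / 2 + lam ^ 2 / (κ * r) + 4 * C / κ) / r, by positivity, div_mul_cancel₀ _ hr.ne'⟩
  have hK₂ : 2 ≤ K * r := by
    have : 0 ≤ κ / 2 + lam ^ 2 / (κ * r) + 4 * C / κ := by positivity
    linarith
  obtain ⟨t₀, ⟨ht₀, hR₀⟩, hKt₀⟩ : ∃ t₀, (1 ≤ t₀ ∧ R₀ ≤ t₀) ∧ 2 * K * lam / κ ≤ t₀ :=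
    ⟨max (max 1 R₀) _, max_le_iff.1 (le_max_left _ _), le_max_right _ _⟩
  refine ⟨K, t₀, ht₀, hK₂, fun u hu t ht => ?_⟩
  refine (hu.isDensityWithFlux_energyDensity ha hB.contDiff (one_pos.trans_le ht₀)
    ).setIntegral_le_initial hΩ (fun x hx t ht => sub_nonpos.1 ?_) ht
  rw [energyDensityDeriv_sub_sum_dx_energyFlux hu hB.contDiff hx ht]
  refine mul_nonpos_of_nonpos_of_nonneg ?_ (expWeight_pos (one_pos.trans_le ht₀) ht.le).le
  rcases lt_or_ge (R₀ + t) ‖x‖ with hout | hin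
  · simp [energyProduction, hu.eq_zero_of_lt_norm ht.le hout, hu.dt_eq_zero_of_lt_norm ht.le hout,
      hu.dx_eq_zero_of_lt_norm _ ht.le hout]
  · refine hB.energyProduction_nonpos hκ hκ1 hC hr hK.ge (by linarith) hK₀ ?_ (subset_closure hx)
      (hra x (subset_closure hx)) (by linarith) _ _ _
    rw [div_le_iff₀ hκ] at hKt₀
    rw [← mul_div_assoc, div_le_iff₀ (by linarith)]
    nlinarith

end WeightedEnergyEstimate

section InitialData

variable {N : ℕ} {Ω : Set (EuclideanSpace ℝ (Fin N))} {a B : EuclideanSpace ℝ (Fin N) → ℝ}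
  {u : EuclideanSpace ℝ (Fin N) → ℝ → ℝ} {R₀ K lam t₀ : ℝ}

/-- The squared size `u² + |∇u|² + uₜ²` of the initial data at a point. -/
def initialDensity (u : EuclideanSpace ℝ (Fin N) → ℝ → ℝ) (x : EuclideanSpace ℝ (Fin N)) : ℝ :=
  u x 0 ^ 2 + ∑ i, dx u i x 0 ^ 2 + dt u x 0 ^ 2

lemma initialDensity_nonneg (u : EuclideanSpace ℝ (Fin N) → ℝ → ℝ)
    (x : EuclideanSpace ℝ (Fin N)) : 0 ≤ initialDensity u x := by
  rw [initialDensity]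
  positivity

lemma sobNormSq_mono {m k : ℕ} (hmk : m ≤ k) (f : EuclideanSpace ℝ (Fin N) → ℝ) :
    sobNormSq m Ω f ≤ sobNormSq k Ω f :=
  Finset.sum_le_sum_of_subset_of_nonneg (Finset.range_mono (by omega))
    fun _ _ _ => integral_nonneg fun _ => by positivity

namespace IsDampedWaveSolution

lemma integrableOn_sq_initial (hu : IsDampedWaveSolution 2 Ω a R₀ u) (hΩ : MeasurableSet Ω) :
    IntegrableOn (fun x => u x 0 ^ 2) Ω :=
  integrableOn_of_eq_zero_of_lt_norm (R := R₀ + 0) hΩ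
    ((contDiff_slice hu.contDiff 0).continuous.pow 2).continuousOn
    fun x _ hx => by simp [hu.eq_zero_of_lt_norm le_rfl hx]

lemma integrableOn_sum_sq_dx_initial (hu : IsDampedWaveSolution 2 Ω a R₀ u)
    (hΩ : MeasurableSet Ω) : IntegrableOn (fun x => ∑ i, dx u i x 0 ^ 2) Ω :=
  integrableOn_of_eq_zero_of_lt_norm (R := R₀ + 0) hΩ
    (continuous_finsetSum _ fun i _ => (contDiff_slice (contDiff_dx hu.contDiff
      one_add_one_eq_two.le i) 0).continuous.pow 2).continuousOn
    fun x _ hx => by simp [hu.dx_eq_zero_of_lt_norm _ le_rfl hx]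

lemma integrableOn_sq_dt_initial (hu : IsDampedWaveSolution 2 Ω a R₀ u) (hΩ : MeasurableSet Ω) :
    IntegrableOn (fun x => dt u x 0 ^ 2) Ω :=
  integrableOn_of_eq_zero_of_lt_norm (R := R₀ + 0) hΩ
    ((contDiff_slice (contDiff_dt hu.contDiff one_add_one_eq_two.le) 0).continuous.pow
      2).continuousOn
    fun x _ hx => by simp [hu.dt_eq_zero_of_lt_norm le_rfl hx]

lemma integrableOn_initialDensity (hu : IsDampedWaveSolution 2 Ω a R₀ u) (hΩ : MeasurableSet Ω) :
    IntegrableOn (initialDensity u) Ω :=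
  ((hu.integrableOn_sq_initial hΩ).add (hu.integrableOn_sum_sq_dx_initial hΩ)).add
    (hu.integrableOn_sq_dt_initial hΩ)

lemma setIntegral_initialDensity (hu : IsDampedWaveSolution 2 Ω a R₀ u) (hΩ : MeasurableSet Ω) :
    ∫ x in Ω, initialDensity u x =
      sobNormSq 1 Ω (fun x => u x 0) + sobNormSq 0 Ω (fun x => deriv (u x) 0) := by
  have h₀ := hu.integrableOn_sq_initial hΩ
  have h₁ := hu.integrableOn_sum_sq_dx_initial hΩ
  have h₀₁ : IntegrableOn (fun x => u x 0 ^ 2 + ∑ i, dx u i x 0 ^ 2) Ω := h₀.add h₁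
  simp only [initialDensity]
  rw [integral_add h₀₁ (hu.integrableOn_sq_dt_initial hΩ), integral_add h₀ h₁]
  simp [sobNormSq, Finset.sum_range_succ, norm_iteratedFDeriv_one, sq_fderiv_eq_sum_sq_dx, dt]

end IsDampedWaveSolution

lemma energyDensity_zero_le {A W : ℝ} {x : EuclideanSpace ℝ (Fin N)} (ht₀ : 0 < t₀) (hK : 0 ≤ K)
    (hA : 0 ≤ A) (hax : a x ≤ A) (hW : expWeight B lam t₀ x 0 ≤ W) :
    energyDensity a u B K lam t₀ x 0 ≤ (K + 1 + A) * W * initialDensity u x := by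
  have hquad : K * (dt u x 0 ^ 2 + ∑ i, dx u i x 0 ^ 2) + 2 * (u x 0 * dt u x 0)
      + a x * u x 0 ^ 2 ≤ (K + 1 + A) * initialDensity u x := by
    have hS : 0 ≤ (1 + A) * ∑ i, dx u i x 0 ^ 2 := by positivity
    have hKu : 0 ≤ K * u x 0 ^ 2 := by positivity
    have hAX : 0 ≤ A * dt u x 0 ^ 2 := by positivity
    have hau := mul_le_mul_of_nonneg_right hax (sq_nonneg (u x 0))
    rw [initialDensity]
    linarith [two_mul_le_add_sq (u x 0) (dt u x 0)]
  calc energyDensity a u B K lam t₀ x 0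
      ≤ (K + 1 + A) * initialDensity u x * expWeight B lam t₀ x 0 :=
        mul_le_mul_of_nonneg_right hquad (expWeight_pos ht₀ le_rfl).le
    _ ≤ (K + 1 + A) * initialDensity u x * W :=
        mul_le_mul_of_nonneg_left hW (mul_nonneg (by positivity) (initialDensity_nonneg u x))
    _ = _ := by ring

lemma exists_setIntegral_energyDensity_zero_le (hΩ : MeasurableSet Ω)
    (ha : ContinuousOn a (closure Ω)) (hB : ContDiff ℝ 2 B) (hK : 0 ≤ K) (ht₀ : 0 < t₀)
    (lam R₀ : ℝ) :
    ∃ C ≥ 0, ∀ u, IsDampedWaveSolution 2 Ω a R₀ u →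
      ∫ x in Ω, energyDensity a u B K lam t₀ x 0 ≤ C * ∫ x in Ω, initialDensity u x := by
  have hcomp : IsCompact (closure Ω ∩ Metric.closedBall 0 R₀) :=
    (isCompact_closedBall 0 R₀).inter_left isClosed_closure
  obtain ⟨A, hA⟩ := hcomp.exists_bound_of_continuousOn (ha.mono Set.inter_subset_left)
  obtain ⟨W, hW⟩ := hcomp.exists_bound_of_continuousOn
    (contDiff_expWeight (t₀ := t₀) (lam := lam) hB 0).continuous.continuousOn
  refine ⟨(K + 1 + max A 0) * max W 0, by positivity, fun u hu => ?_⟩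
  rw [← integral_const_mul]
  refine setIntegral_mono_on
    ((hu.isDensityWithFlux_energyDensity ha hB ht₀).integrableOn hΩ le_rfl)
    ((hu.integrableOn_initialDensity hΩ).const_mul _) hΩ fun x hx => ?_
  rcases lt_or_ge R₀ ‖x‖ with hout | hin
  · rw [(hu.isDensityWithFlux_energyDensity ha hB ht₀).eq_zero_of_lt_norm x 0 le_rfl (by simpa)]
    exact mul_nonneg (by positivity) (initialDensity_nonneg u x)
  · have hx' : x ∈ closure Ω ∩ Metric.closedBall 0 R₀ :=
      ⟨subset_closure hx, mem_closedBall_zero_iff.2 hin⟩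
    exact energyDensity_zero_le ht₀ hK (le_max_right _ _)
      ((Real.le_norm_self _).trans ((hA x hx').trans (le_max_left _ _)))
      ((Real.le_norm_self _).trans ((hW x hx').trans (le_max_left _ _)))

end InitialData

section WeightedDecay

variable {N : ℕ} {α a₀ : ℝ} {Ω : Set (EuclideanSpace ℝ (Fin N))}
  {a B : EuclideanSpace ℝ (Fin N) → ℝ} {u : EuclideanSpace ℝ (Fin N) → ℝ → ℝ} {R₀ K lam t₀ : ℝ}

lemma rpow_mul_le_energyDensity {x : EuclideanSpace ℝ (Fin N)} (ht₀ : 0 < t₀) (hB : 0 ≤ B x)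
    (hax : 0 < a x) (hKa : 2 ≤ K * a x) {t : ℝ} (ht : 0 ≤ t) :
    (t₀ + t) ^ lam / 2 * (a x * u x t ^ 2) ≤ energyDensity a u B K lam t₀ x t := by
  have hK : 0 ≤ K := nonneg_of_mul_nonneg_left (zero_le_two.trans hKa) hax
  have hquad : a x * u x t ^ 2 / 2 ≤ K * (dt u x t ^ 2 + ∑ i, dx u i x t ^ 2)
      + 2 * (u x t * dt u x t) + a x * u x t ^ 2 := by
    have hsq : a x / 2 * (u x t + 2 / a x * dt u x t) ^ 2 =
        a x * u x t ^ 2 / 2 + 2 * (u x t * dt u x t) + 2 / a x * dt u x t ^ 2 := by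
      field_simp
      ring
    have hX : 2 / a x * dt u x t ^ 2 ≤ K * dt u x t ^ 2 :=
      mul_le_mul_of_nonneg_right ((div_le_iff₀ hax).2 hKa) (sq_nonneg _)
    have hsq₀ : 0 ≤ a x / 2 * (u x t + 2 / a x * dt u x t) ^ 2 := by positivity
    have hS : 0 ≤ K * ∑ i, dx u i x t ^ 2 := by positivity
    linarith
  calc (t₀ + t) ^ lam / 2 * (a x * u x t ^ 2)
      = a x * u x t ^ 2 / 2 * (t₀ + t) ^ lam := by ring
    _ ≤ a x * u x t ^ 2 / 2 * expWeight B lam t₀ x t := by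
        gcongr
        exact rpow_le_expWeight ht₀ hB ht
    _ ≤ _ := mul_le_mul_of_nonneg_right hquad (expWeight_pos ht₀ ht).le

lemma IsDampedWaveSolution.integrableOn_mul_sq (hu : IsDampedWaveSolution 2 Ω a R₀ u)
    (hΩ : MeasurableSet Ω) (ha : ContinuousOn a (closure Ω)) {t : ℝ} (ht : 0 ≤ t) :
    IntegrableOn (fun x => a x * u x t ^ 2) Ω :=
  integrableOn_of_eq_zero_of_lt_norm (R := R₀ + t) hΩ
    (ha.mul ((contDiff_slice hu.contDiff t).continuous.pow 2).continuousOn)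
    fun x _ hx => by simp [hu.eq_zero_of_lt_norm ht hx]

lemma IsDampedWaveSolution.rpow_mul_setIntegral_le_setIntegral_energyDensity
    (hu : IsDampedWaveSolution 2 Ω a R₀ u) (hΩ : MeasurableSet Ω)
    (ha : ContinuousOn a (closure Ω)) (hB : ContDiff ℝ 2 B) (hB₀ : ∀ x ∈ Ω, 0 ≤ B x) {r : ℝ}
    (hr : 0 < r) (hra : ∀ x ∈ Ω, r ≤ a x) (hKr : 2 ≤ K * r) (ht₀ : 1 ≤ t₀) (hlam : 0 ≤ lam)
    {t : ℝ} (ht : 0 ≤ t) :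
    (1 + t) ^ lam / 2 * ∫ x in Ω, a x * u x t ^ 2 ≤
      ∫ x in Ω, energyDensity a u B K lam t₀ x t := by
  have hK : 0 ≤ K := nonneg_of_mul_nonneg_left (zero_le_two.trans hKr) hr
  have ht₀' : 0 < t₀ := one_pos.trans_le ht₀
  rw [← integral_const_mul]
  refine setIntegral_mono_on ((hu.integrableOn_mul_sq hΩ ha ht).const_mul _)
    ((hu.isDensityWithFlux_energyDensity ha hB ht₀').integrableOn hΩ ht) hΩ fun x hx => ?_
  have hax : 0 < a x := hr.trans_le (hra x hx)
  calc (1 + t) ^ lam / 2 * (a x * u x t ^ 2)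
      ≤ (t₀ + t) ^ lam / 2 * (a x * u x t ^ 2) := by gcongr
    _ ≤ energyDensity a u B K lam t₀ x t := rpow_mul_le_energyDensity ht₀' (hB₀ x hx) hax
        (hKr.trans (mul_le_mul_of_nonneg_left (hra x hx) hK)) ht

theorem exists_rpow_mul_setIntegral_le (hα : 0 < α) (hN : 0 < N) (hΩ : MeasurableSet Ω)
    (ha : ContinuousOn a (closure Ω)) (hapos : ∀ x ∈ closure Ω, 0 < a x) (ha₀ : 0 < a₀)
    (halim : Tendsto (fun x : EuclideanSpace ℝ (Fin N) => ‖x‖ ^ (-α) * a x) (cocompact _)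
      (nhds a₀))
    (hlam : 0 ≤ lam) (hlam' : lam < (N + α) / (2 + α)) (R₀ : ℝ) :
    ∃ C ≥ 0, ∀ u, IsDampedWaveSolution 2 Ω a R₀ u → ∀ t ≥ (0 : ℝ),
      (1 + t) ^ lam * ∫ x in Ω, a x * u x t ^ 2 ≤ C * ∫ x in Ω, initialDensity u x := by
  obtain ⟨κ, hκ, hκ1, C, hC, B, hB⟩ :=
    exists_isAdmissibleWeight hα hN ha hapos ha₀ halim hlam hlam'
  obtain ⟨r, hr, hra⟩ := exists_pos_le hα ha hapos ha₀ halim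
  obtain ⟨K, t₀, ht₀, hKr, hmono⟩ :=
    hB.exists_setIntegral_energyDensity_le hκ hκ1 hC hΩ ha hr hra R₀
  obtain ⟨D, hD, hinit⟩ := exists_setIntegral_energyDensity_zero_le hΩ ha hB.contDiff
    (nonneg_of_mul_nonneg_left (zero_le_two.trans hKr) hr) (one_pos.trans_le ht₀) lam R₀
  refine ⟨2 * D, by positivity, fun u hu t ht => ?_⟩
  have hlower := hu.rpow_mul_setIntegral_le_setIntegral_energyDensity hΩ ha hB.contDiff
    (fun x hx => hB.nonneg x (subset_closure hx)) hr (fun x hx => hra x (subset_closure hx)) hKr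
    ht₀ hlam ht
  linarith [hmono u hu t ht, hinit u hu]

end WeightedDecay

section GaussianPoincare

variable {N : ℕ} {Ω : Set (EuclideanSpace ℝ (Fin N))}

lemma sum_fderiv_mul_coord {g : EuclideanSpace ℝ (Fin N) → ℝ} {x : EuclideanSpace ℝ (Fin N)}
    (hg : DifferentiableAt ℝ g x) :
    ∑ i, fderiv ℝ (fun y => g y * y i) x (EuclideanSpace.single i 1) =
      N * g x + fderiv ℝ g x x := by
  have hcoord (i : Fin N) : HasFDerivAt (fun y : EuclideanSpace ℝ (Fin N) => y i)
      (EuclideanSpace.proj i : EuclideanSpace ℝ (Fin N) →L[ℝ] ℝ) x :=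
    (EuclideanSpace.proj i : EuclideanSpace ℝ (Fin N) →L[ℝ] ℝ).hasFDerivAt
  have hx : ∑ i, x i • EuclideanSpace.single i (1 : ℝ) = x := by
    simpa using (EuclideanSpace.basisFun (Fin N) ℝ).sum_repr x
  calc ∑ i, fderiv ℝ (fun y => g y * y i) x (EuclideanSpace.single i 1)
      = ∑ i, (g x + fderiv ℝ g x (x i • EuclideanSpace.single i 1)) := by
        refine Finset.sum_congr rfl fun i _ => ?_
        rw [(hg.hasFDerivAt.fun_mul (hcoord i)).fderiv]
        simp
    _ = N * g x + fderiv ℝ g x x := by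
        rw [Finset.sum_add_distrib, ← map_sum, hx]
        simp

theorem setIntegral_fderiv_apply_self_add_eq_zero (hΩ : MeasurableSet Ω)
    {g : EuclideanSpace ℝ (Fin N) → ℝ} (hg : ContDiff ℝ 1 g) (hgc : HasCompactSupport g)
    (hg₀ : ∀ x ∈ frontier Ω, g x = 0) : ∫ x in Ω, (N * g x + fderiv ℝ g x x) = 0 := by
  have hfield (i : Fin N) : ContDiff ℝ 1 (fun y : EuclideanSpace ℝ (Fin N) => g y * y i) :=
    hg.mul (EuclideanSpace.proj i : EuclideanSpace ℝ (Fin N) →L[ℝ] ℝ).contDiff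
  have hfieldc (i : Fin N) : HasCompactSupport fun y : EuclideanSpace ℝ (Fin N) => g y * y i :=
    hgc.mul_right
  simp only [← sum_fderiv_mul_coord (hg.differentiable one_ne_zero _)]
  rw [integral_finsetSum _ fun i _ => ((((hfield i).continuous_fderiv one_ne_zero).clm_apply
    continuous_const).integrable_of_hasCompactSupport ((hfieldc i).fderiv_apply ℝ _)).integrableOn]
  exact Finset.sum_eq_zero fun i _ => setIntegral_fderiv_eq_zero hΩ (hfield i) (hfieldc i)
    (fun x hx => by simp [hg₀ x hx]) _

variable {w : EuclideanSpace ℝ (Fin N) → ℝ} {k : ℝ}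

lemma fderiv_sq_mul_gaussian_apply_self {x : EuclideanSpace ℝ (Fin N)}
    (hw : DifferentiableAt ℝ w x) (k : ℝ) :
    fderiv ℝ (fun y => w y ^ 2 * Real.exp (-k * ‖y‖ ^ 2)) x x =
      (2 * w x * fderiv ℝ w x x - 2 * k * ‖x‖ ^ 2 * w x ^ 2) * Real.exp (-k * ‖x‖ ^ 2) := by
  have hgauss := (((hasStrictFDerivAt_norm_sq x).hasFDerivAt).const_mul (-k)).exp
  have hprod : HasFDerivAt (fun y => w y ^ 2 * Real.exp (-k * ‖y‖ ^ 2)) _ x :=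
    (hw.hasFDerivAt.pow 2).mul hgauss
  rw [hprod.fderiv]
  simp only [neg_mul, neg_smul, smul_neg, Nat.add_one_sub_one, pow_one, nsmul_eq_mul,
    Nat.cast_ofNat, add_apply, neg_apply, smul_apply, coe_innerSL_apply,
    inner_self_eq_norm_sq_to_K, Real.ringHom_apply, smul_eq_mul]
  ring

lemma mul_sq_gaussian_le_one (k r : ℝ) : k * r ^ 2 * Real.exp (-k * r ^ 2) ≤ 1 := by
  rw [neg_mul, Real.exp_neg, mul_inv_le_iff₀ (Real.exp_pos _), one_mul]
  linarith [Real.add_one_le_exp (k * r ^ 2)]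

lemma dilation_gaussian_le (hk : 0 < k) {x : EuclideanSpace ℝ (Fin N)}
    (hw : DifferentiableAt ℝ w x) (hx : N + 1 ≤ 2 * k * ‖x‖ ^ 2) :
    N * (w x ^ 2 * Real.exp (-k * ‖x‖ ^ 2))
        + fderiv ℝ (fun y => w y ^ 2 * Real.exp (-k * ‖y‖ ^ 2)) x x ≤
      2 / k * ‖fderiv ℝ w x‖ ^ 2 - w x ^ 2 * Real.exp (-k * ‖x‖ ^ 2) / 2 := by
  rw [fderiv_sq_mul_gaussian_apply_self hw]
  set G := Real.exp (-k * ‖x‖ ^ 2)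
  have : 0 < G := Real.exp_pos _
  have hyoung : 2 * w x * fderiv ℝ w x x ≤ w x ^ 2 / 2 + 2 * fderiv ℝ w x x ^ 2 := by
    linarith [sq_nonneg (w x - 2 * fderiv ℝ w x x)]
  have hD : fderiv ℝ w x x ^ 2 * G ≤ ‖fderiv ℝ w x‖ ^ 2 / k := by
    have hop : fderiv ℝ w x x ^ 2 ≤ (‖fderiv ℝ w x‖ * ‖x‖) ^ 2 :=
      sq_le_sq' (neg_le_of_abs_le ((fderiv ℝ w x).le_opNorm x))
        (le_of_abs_le ((fderiv ℝ w x).le_opNorm x))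
    rw [le_div_iff₀ hk]
    calc fderiv ℝ w x x ^ 2 * G * k ≤ (‖fderiv ℝ w x‖ * ‖x‖) ^ 2 * G * k := by gcongr
      _ = ‖fderiv ℝ w x‖ ^ 2 * (k * ‖x‖ ^ 2 * G) := by ring
      _ ≤ ‖fderiv ℝ w x‖ ^ 2 :=
        mul_le_of_le_one_right (sq_nonneg _) (mul_sq_gaussian_le_one k ‖x‖)
  calc N * (w x ^ 2 * G) + (2 * w x * fderiv ℝ w x x - 2 * k * ‖x‖ ^ 2 * w x ^ 2) * G
      = (N - 2 * k * ‖x‖ ^ 2) * (w x ^ 2 * G) + 2 * w x * fderiv ℝ w x x * G := by ring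
    _ ≤ -1 * (w x ^ 2 * G) + (w x ^ 2 / 2 + 2 * fderiv ℝ w x x ^ 2) * G := by
        gcongr
        linarith
    _ = 2 * (fderiv ℝ w x x ^ 2 * G) - w x ^ 2 * G / 2 := by ring
    _ ≤ 2 * (‖fderiv ℝ w x‖ ^ 2 / k) - w x ^ 2 * G / 2 := by gcongr
    _ = _ := by ring

theorem setIntegral_sq_mul_gaussian_le (hΩ : MeasurableSet Ω) (hk : 0 < k)
    (hΩk : ∀ x ∈ Ω, N + 1 ≤ 2 * k * ‖x‖ ^ 2) (hw : ContDiff ℝ 1 w) (hwc : HasCompactSupport w)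
    (hw₀ : ∀ x ∈ frontier Ω, w x = 0) :
    ∫ x in Ω, w x ^ 2 * Real.exp (-k * ‖x‖ ^ 2) ≤ 4 / k * ∫ x in Ω, ‖fderiv ℝ w x‖ ^ 2 := by
  set g := fun x => w x ^ 2 * Real.exp (-k * ‖x‖ ^ 2)
  have hg : ContDiff ℝ 1 g := (hw.pow 2).mul (contDiff_const.mul (contDiff_norm_sq ℝ)).exp
  have hgc : HasCompactSupport g := (hwc.comp_left (g := (· ^ 2)) (by simp)).mul_right
  have hg_int : IntegrableOn g Ω := (hg.continuous.integrable_of_hasCompactSupport hgc).integrableOn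
  have hDc : HasCompactSupport fun x => ‖fderiv ℝ w x‖ ^ 2 :=
    (hwc.fderiv ℝ).mono fun x hx h => hx (by simp [h])
  have hD_int : IntegrableOn (fun x => ‖fderiv ℝ w x‖ ^ 2) Ω :=
    (((hw.continuous_fderiv one_ne_zero).norm.pow 2).integrable_of_hasCompactSupport
      hDc).integrableOn
  have hdil_int : IntegrableOn (fun x => N * g x + fderiv ℝ g x x) Ω := by
    have hsupp : HasCompactSupport fun x => fderiv ℝ g x x :=
      (hgc.fderiv ℝ).mono fun x hx h => hx (by simp [h])
    exact (hg_int.const_mul _).add (((hg.continuous_fderiv one_ne_zero).clm_apply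
      continuous_id).integrable_of_hasCompactSupport hsupp).integrableOn
  have hmono : ∫ x in Ω, (N * g x + fderiv ℝ g x x) ≤
      ∫ x in Ω, (2 / k * ‖fderiv ℝ w x‖ ^ 2 - g x / 2) :=
    setIntegral_mono_on hdil_int ((hD_int.const_mul (2 / k)).sub (hg_int.div_const 2)) hΩ
      fun x hx => dilation_gaussian_le hk (hw.differentiable one_ne_zero x) (hΩk x hx)
  rw [setIntegral_fderiv_apply_self_add_eq_zero hΩ hg hgc fun x hx => by simp [g, hw₀ x hx],
    integral_sub (hD_int.const_mul _) (hg_int.div_const 2), integral_const_mul,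
    integral_div] at hmono
  linear_combination 2 * hmono

end GaussianPoincare

section PrimitiveEnergy

variable {N : ℕ} {Ω : Set (EuclideanSpace ℝ (Fin N))} {a : EuclideanSpace ℝ (Fin N) → ℝ}
  {R₀ : ℝ} {u : EuclideanSpace ℝ (Fin N) → ℝ → ℝ}

/-- The source term `f = uₜ(0) + a u(0)` of the equation `vₜₜ - Δv + a vₜ = f` solved by the time
primitive `v` of `u`. -/
def primitiveSource (a : EuclideanSpace ℝ (Fin N) → ℝ) (u : EuclideanSpace ℝ (Fin N) → ℝ → ℝ)
    (x : EuclideanSpace ℝ (Fin N)) : ℝ :=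
  dt u x 0 + a x * u x 0

/-- The energy density `vₜ² + |∇v|² - 2fv` of the time primitive `v` of `u`, where `vₜ = u` and
`f` is `primitiveSource a u`. -/
def primitiveDensity (a : EuclideanSpace ℝ (Fin N) → ℝ) (u : EuclideanSpace ℝ (Fin N) → ℝ → ℝ)
    (x : EuclideanSpace ℝ (Fin N)) (t : ℝ) : ℝ :=
  u x t ^ 2 + ∑ i, dx (timePrimitive u) i x t ^ 2
    - 2 * (primitiveSource a u x * timePrimitive u x t)

/-- The time derivative of `primitiveDensity`. -/
def primitiveDensityDeriv (a : EuclideanSpace ℝ (Fin N) → ℝ)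
    (u : EuclideanSpace ℝ (Fin N) → ℝ → ℝ) (x : EuclideanSpace ℝ (Fin N)) (t : ℝ) : ℝ :=
  2 * u x t * dt u x t + ∑ i, 2 * dx (timePrimitive u) i x t * dx u i x t
    - 2 * (primitiveSource a u x * u x t)

/-- The flux `2 vₜ ∇v` of `primitiveDensity`, where `v` is the time primitive of `u`. -/
def primitiveFlux (u : EuclideanSpace ℝ (Fin N) → ℝ → ℝ) (i : Fin N)
    (x : EuclideanSpace ℝ (Fin N)) (t : ℝ) : ℝ :=
  2 * u x t * dx (timePrimitive u) i x t

lemma primitiveDensity_zero (a : EuclideanSpace ℝ (Fin N) → ℝ)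
    (u : EuclideanSpace ℝ (Fin N) → ℝ → ℝ) (x : EuclideanSpace ℝ (Fin N)) :
    primitiveDensity a u x 0 = u x 0 ^ 2 := by
  simp [primitiveDensity, timePrimitive, dx]

lemma dt_dx_timePrimitive (hu : ContDiff ℝ 2 (Function.uncurry u)) (i : Fin N) :
    dt (dx (timePrimitive u) i) = dx u i := by
  rw [dx_timePrimitive (hu.of_le one_le_two),
    dt_timePrimitive (contDiff_dx hu one_add_one_eq_two.le i).continuous]

lemma hasDerivAt_primitiveDensity (hu : ContDiff ℝ 2 (Function.uncurry u))
    (a : EuclideanSpace ℝ (Fin N) → ℝ) (x : EuclideanSpace ℝ (Fin N)) (t : ℝ) :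
    HasDerivAt (primitiveDensity a u x) (primitiveDensityDeriv a u x t) t := by
  have hv := contDiff_timePrimitive (n := 2) hu
  have hvt : HasDerivAt (timePrimitive u x) (u x t) t := by
    simpa [dt_timePrimitive hu.continuous] using hasDerivAt_dt (hv.of_le one_le_two) x t
  have hgrad : HasDerivAt (fun t => ∑ i, dx (timePrimitive u) i x t ^ 2)
      (∑ i, 2 * dx (timePrimitive u) i x t * dx u i x t) t := by
    refine HasDerivAt.fun_sum fun i _ => ?_
    have hvx := hasDerivAt_dt (contDiff_dx hv one_add_one_eq_two.le i) x t
    rw [dt_dx_timePrimitive hu] at hvx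
    exact (hvx.pow 2).congr_deriv (by simp)
  refine (((hasDerivAt_dt (hu.of_le one_le_two) x t).pow 2).add hgrad).sub
    ((hvt.const_mul _).const_mul 2) |>.congr_deriv ?_
  simp [primitiveDensityDeriv]

lemma continuousOn_primitiveSource (hu : ContDiff ℝ 2 (Function.uncurry u))
    {s : Set (EuclideanSpace ℝ (Fin N))} (ha : ContinuousOn a s) :
    ContinuousOn (primitiveSource a u) s :=
  (contDiff_slice (contDiff_dt hu one_add_one_eq_two.le) 0).continuous.continuousOn.add
    (ha.mul (contDiff_slice hu 0).continuous.continuousOn)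

lemma continuousOn_primitiveDensity (hu : ContDiff ℝ 2 (Function.uncurry u))
    {s : Set (EuclideanSpace ℝ (Fin N))} (ha : ContinuousOn a s) :
    ContinuousOn (Function.uncurry (primitiveDensity a u)) (s ×ˢ Set.Ici 0) := by
  have hv := contDiff_timePrimitive (n := 2) hu
  have hgrad := (continuous_finsetSum Finset.univ fun i _ =>
    (contDiff_dx hv one_add_one_eq_two.le i).continuous.pow 2).continuousOn (s := s ×ˢ Set.Ici 0)
  have hu₀ := hu.continuous.continuousOn (s := s ×ˢ Set.Ici 0)
  have hv₀ := hv.continuous.continuousOn (s := s ×ˢ Set.Ici 0)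
  have hf := continuousOn_primitiveSource hu ha
  simp only [Function.uncurry_def] at *
  unfold primitiveDensity
  fun_prop (disch := exact Set.mapsTo_fst_prod)

lemma continuousOn_primitiveDensityDeriv (hu : ContDiff ℝ 2 (Function.uncurry u))
    {s : Set (EuclideanSpace ℝ (Fin N))} (ha : ContinuousOn a s) :
    ContinuousOn (Function.uncurry (primitiveDensityDeriv a u)) (s ×ˢ Set.Ici 0) := by
  have hv := contDiff_timePrimitive (n := 2) hu
  have hgradt := (continuous_finsetSum Finset.univ fun i _ =>
    ((contDiff_dx hv one_add_one_eq_two.le i).continuous.const_mul 2).mul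
      (contDiff_dx hu one_add_one_eq_two.le i).continuous).continuousOn (s := s ×ˢ Set.Ici 0)
  have hu₀ := hu.continuous.continuousOn (s := s ×ˢ Set.Ici 0)
  have hut := (contDiff_dt hu one_add_one_eq_two.le).continuous.continuousOn (s := s ×ˢ Set.Ici 0)
  have hf := continuousOn_primitiveSource hu ha
  simp only [Function.uncurry_def] at *
  unfold primitiveDensityDeriv
  fun_prop (disch := exact Set.mapsTo_fst_prod)

lemma contDiff_primitiveFlux (hu : ContDiff ℝ 2 (Function.uncurry u)) (i : Fin N) (t : ℝ) :
    ContDiff ℝ 1 (fun x => primitiveFlux u i x t) :=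
  (contDiff_const.mul (contDiff_slice (hu.of_le one_le_two) t)).mul
    (contDiff_slice (contDiff_dx (contDiff_timePrimitive (n := 2) hu) one_add_one_eq_two.le i) t)

lemma dx_primitiveFlux (hu : ContDiff ℝ 2 (Function.uncurry u)) (i : Fin N)
    (x : EuclideanSpace ℝ (Fin N)) (t : ℝ) :
    dx (primitiveFlux u i) i x t = 2 * dx (timePrimitive u) i x t * dx u i x t
      + 2 * u x t * dx (dx (timePrimitive u) i) i x t := by
  have hv := contDiff_timePrimitive (n := 2) hu
  have hu₀ := hasLineDerivAt_dx (hu.of_le one_le_two) i x t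
  have hvx := hasLineDerivAt_dx (contDiff_dx hv one_add_one_eq_two.le i) i x t
  unfold HasLineDerivAt at *
  have hflux : HasLineDerivAt ℝ (fun y => primitiveFlux u i y t) _ x
      (EuclideanSpace.single i 1) := (hu₀.const_mul 2).mul hvx
  have hdiff := (contDiff_primitiveFlux hu i t).differentiable one_ne_zero x
  rw [dx, ← hdiff.lineDeriv_eq_fderiv, hflux.lineDeriv]
  simp only [zero_smul, add_zero]
  ring

namespace IsDampedWaveSolution

lemma timePrimitive_eq_zero_of_lt_norm {k : ℕ} (hu : IsDampedWaveSolution k Ω a R₀ u)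
    {x : EuclideanSpace ℝ (Fin N)} {t : ℝ} (ht : 0 ≤ t) (hx : R₀ + t < ‖x‖) :
    timePrimitive u x t = 0 := by
  refine intervalIntegral.integral_zero_ae (Eventually.of_forall fun s hs => ?_)
  rw [Set.uIoc_of_le ht] at hs
  exact hu.eq_zero_of_lt_norm hs.1.le (by linarith [hs.2])

lemma timePrimitive_eq_zero_of_mem_frontier {k : ℕ} (hu : IsDampedWaveSolution k Ω a R₀ u)
    {x : EuclideanSpace ℝ (Fin N)} (hx : x ∈ frontier Ω) {t : ℝ} (ht : 0 ≤ t) :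
    timePrimitive u x t = 0 := by
  refine intervalIntegral.integral_zero_ae (Eventually.of_forall fun s hs => ?_)
  rw [Set.uIoc_of_le ht] at hs
  exact hu.eq_zero_of_mem_frontier hx hs.1

lemma dx_timePrimitive_eq_zero_of_lt_norm {k : ℕ} (hu : IsDampedWaveSolution k Ω a R₀ u)
    (i : Fin N) {x : EuclideanSpace ℝ (Fin N)} {t : ℝ} (ht : 0 ≤ t) (hx : R₀ + t < ‖x‖) :
    dx (timePrimitive u) i x t = 0 := by
  refine dx_eq_zero_of_eventuallyEq ?_
  filter_upwards [continuous_norm.continuousAt.eventually_mem (lt_mem_nhds hx)] with y hy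
  exact hu.timePrimitive_eq_zero_of_lt_norm ht hy

lemma isDensityWithFlux_primitiveDensity (hu : IsDampedWaveSolution 2 Ω a R₀ u)
    (ha : ContinuousOn a (closure Ω)) :
    IsDensityWithFlux Ω R₀ (primitiveDensity a u) (primitiveDensityDeriv a u)
      (primitiveFlux u) where
  continuousOn := continuousOn_primitiveDensity hu.contDiff ha
  continuousOn_deriv := continuousOn_primitiveDensityDeriv hu.contDiff ha
  hasDerivAt x _ t _ := hasDerivAt_primitiveDensity hu.contDiff a x t
  eq_zero_of_lt_norm x t ht hx := by
    simp [primitiveDensity, hu.eq_zero_of_lt_norm ht hx,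
      hu.timePrimitive_eq_zero_of_lt_norm ht hx, hu.dx_timePrimitive_eq_zero_of_lt_norm _ ht hx]
  contDiff_flux i t _ := contDiff_primitiveFlux hu.contDiff i t
  flux_eq_zero_of_lt_norm i x t ht hx := by
    simp [primitiveFlux, hu.eq_zero_of_lt_norm ht.le hx]
  flux_eq_zero_of_mem_frontier i x hx t ht := by
    simp [primitiveFlux, hu.eq_zero_of_mem_frontier hx ht]

lemma sum_dx_dx_timePrimitive (hu : IsDampedWaveSolution 2 Ω a R₀ u)
    {x : EuclideanSpace ℝ (Fin N)} (hx : x ∈ Ω) {t : ℝ} (ht : 0 ≤ t) :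
    ∑ i, dx (dx (timePrimitive u) i) i x t = dt u x t + a x * u x t - primitiveSource a u x := by
  have hux (i : Fin N) := contDiff_dx hu.contDiff one_add_one_eq_two.le i
  have huxx (i : Fin N) : Continuous (dx (dx u i) i x) :=
    (contDiff_dx (m := 0) (hux i) (by simp) i).continuous.comp (.prodMk_right x)
  have hderiv (s : ℝ) : HasDerivAt (fun s => dt u x s + a x * u x s)
      (dt (dt u) x s + a x * dt u x s) s :=
    (hasDerivAt_dt (contDiff_dt hu.contDiff one_add_one_eq_two.le) x s).add
      ((hasDerivAt_dt (hu.contDiff.of_le one_le_two) x s).const_mul (a x))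
  calc ∑ i, dx (dx (timePrimitive u) i) i x t
      = ∫ s in (0 : ℝ)..t, ∑ i, dx (dx u i) i x s := by
        rw [intervalIntegral.integral_finsetSum fun i _ => (huxx i).intervalIntegrable 0 t]
        refine Finset.sum_congr rfl fun i _ => ?_
        rw [dx_timePrimitive (hu.contDiff.of_le one_le_two), dx_timePrimitive (hux i),
          timePrimitive]
    _ = dt u x t + a x * u x t - primitiveSource a u x := by
        refine intervalIntegral.integral_eq_sub_of_hasDerivAt_of_le ht
          (fun s _ => (hderiv s).continuousAt.continuousWithinAt)
          (fun s hs => (hderiv s).congr_deriv ?_)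
          ((continuous_finsetSum _ fun i _ => huxx i).intervalIntegrable 0 t)
        rw [hu.dt_dt_eq hx hs.1, sub_add_cancel]

lemma primitiveDensityDeriv_sub_sum_dx_primitiveFlux (hu : IsDampedWaveSolution 2 Ω a R₀ u)
    {x : EuclideanSpace ℝ (Fin N)} (hx : x ∈ Ω) {t : ℝ} (ht : 0 ≤ t) :
    primitiveDensityDeriv a u x t - ∑ i, dx (primitiveFlux u i) i x t =
      -2 * (a x * u x t ^ 2) := by
  simp only [dx_primitiveFlux hu.contDiff, Finset.sum_add_distrib, ← Finset.mul_sum,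
    hu.sum_dx_dx_timePrimitive hx ht, primitiveDensityDeriv]
  ring

end IsDampedWaveSolution

end PrimitiveEnergy

section EndpointDecay

variable {N : ℕ} {Ω : Set (EuclideanSpace ℝ (Fin N))}
  {a : EuclideanSpace ℝ (Fin N) → ℝ} {u : EuclideanSpace ℝ (Fin N) → ℝ → ℝ} {R₀ K t₀ : ℝ}

lemma exists_pos_forall_le_mul_sq_norm {E : Type*} [SeminormedAddCommGroup E] {s : Set E}
    (hs : (0 : E) ∉ closure s) (c : ℝ) : ∃ k > 0, ∀ x ∈ s, c ≤ 2 * k * ‖x‖ ^ 2 := by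
  obtain ⟨r, hr, hball⟩ := Metric.isOpen_iff.1 isClosed_closure.isOpen_compl 0 hs
  refine ⟨(|c| + 1) / (2 * r ^ 2), by positivity, fun x hx => ?_⟩
  have hrx : r ≤ ‖x‖ := by
    by_contra! h
    exact hball (mem_ball_zero_iff.2 h) (subset_closure hx)
  calc c ≤ |c| + 1 := by linarith [le_abs_self c]
    _ = 2 * ((|c| + 1) / (2 * r ^ 2)) * r ^ 2 := by field_simp
    _ ≤ 2 * ((|c| + 1) / (2 * r ^ 2)) * ‖x‖ ^ 2 := by gcongr

lemma primitiveSource_sq_le {A : ℝ} {x : EuclideanSpace ℝ (Fin N)} (hA : |a x| ≤ A) :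
    primitiveSource a u x ^ 2 ≤ 2 * (1 + A ^ 2) * initialDensity u x := by
  have hS : 0 ≤ ∑ i, dx u i x 0 ^ 2 := by positivity
  calc primitiveSource a u x ^ 2 ≤ 2 * (dt u x 0 ^ 2 + (a x * u x 0) ^ 2) := add_sq_le
    _ ≤ 2 * (dt u x 0 ^ 2 + A ^ 2 * u x 0 ^ 2) := by
        rw [mul_pow]
        gcongr 2 * (_ + ?_ * _)
        exact sq_le_sq' (abs_le.1 hA).1 (abs_le.1 hA).2
    _ ≤ 2 * (1 + A ^ 2) * initialDensity u x := by
        rw [initialDensity, mul_assoc]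
        gcongr
        linarith [sq_nonneg (u x 0), mul_nonneg (sq_nonneg A) hS,
          mul_nonneg (sq_nonneg A) (sq_nonneg (dt u x 0))]

lemma exists_primitiveSource_sq_mul_exp_le (ha : ContinuousOn a (closure Ω)) {k : ℝ} (hk : 0 ≤ k)
    (R₀ : ℝ) : ∃ C ≥ 0, ∀ u, IsDampedWaveSolution 2 Ω a R₀ u → ∀ x ∈ Ω,
      primitiveSource a u x ^ 2 * Real.exp (k * ‖x‖ ^ 2) ≤ C * initialDensity u x := by
  obtain ⟨A, hA⟩ := ((isCompact_closedBall 0 R₀).inter_left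
    isClosed_closure).exists_bound_of_continuousOn (ha.mono Set.inter_subset_left)
  refine ⟨2 * (1 + A ^ 2) * Real.exp (k * R₀ ^ 2), by positivity, fun u hu x hx => ?_⟩
  have hD := initialDensity_nonneg u x
  rcases lt_or_ge R₀ ‖x‖ with hout | hin
  · have hf : primitiveSource a u x = 0 := by
      rw [primitiveSource, hu.eq_zero_of_lt_norm le_rfl (by simpa),
        hu.dt_eq_zero_of_lt_norm le_rfl (by simpa), mul_zero, add_zero]
    rw [hf, zero_pow two_ne_zero, zero_mul]
    positivity
  · calc primitiveSource a u x ^ 2 * Real.exp (k * ‖x‖ ^ 2)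
        ≤ 2 * (1 + A ^ 2) * initialDensity u x * Real.exp (k * R₀ ^ 2) := by
          gcongr
          exact primitiveSource_sq_le (hA x ⟨subset_closure hx, mem_closedBall_zero_iff.2 hin⟩)
      _ = _ := by ring

lemma le_primitiveDensity {k C : ℝ} (hk : 0 < k) {x : EuclideanSpace ℝ (Fin N)}
    (hf : primitiveSource a u x ^ 2 * Real.exp (k * ‖x‖ ^ 2) ≤ C * initialDensity u x) (t : ℝ) :
    ∑ i, dx (timePrimitive u) i x t ^ 2
        - k / 4 * (timePrimitive u x t ^ 2 * Real.exp (-k * ‖x‖ ^ 2))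
        - 4 / k * C * initialDensity u x ≤ primitiveDensity a u x t := by
  have hyoung : 2 * (primitiveSource a u x * timePrimitive u x t) ≤
      k / 4 * (timePrimitive u x t ^ 2 * Real.exp (-k * ‖x‖ ^ 2))
        + 4 / k * (primitiveSource a u x ^ 2 * Real.exp (k * ‖x‖ ^ 2)) := by
    refine le_add_of_sq_le_four_mul (by positivity) (by positivity) (le_of_eq ?_)
    rw [neg_mul, Real.exp_neg]
    field_simp
    ring
  have hsource := mul_le_mul_of_nonneg_left hf (by positivity : 0 ≤ 4 / k)
  rw [primitiveDensity]
  linarith [sq_nonneg (u x t)]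

lemma IsDampedWaveSolution.setIntegral_sq_timePrimitive_mul_gaussian_le
    (hu : IsDampedWaveSolution 2 Ω a R₀ u) (hΩ : MeasurableSet Ω) {k : ℝ} (hk : 0 < k)
    (hΩk : ∀ x ∈ Ω, N + 1 ≤ 2 * k * ‖x‖ ^ 2) {t : ℝ} (ht : 0 ≤ t) :
    k / 4 * ∫ x in Ω, timePrimitive u x t ^ 2 * Real.exp (-k * ‖x‖ ^ 2) ≤
      ∫ x in Ω, ∑ i, dx (timePrimitive u) i x t ^ 2 := by
  have hv : ContDiff ℝ 1 (fun x => timePrimitive u x t) :=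
    contDiff_slice ((contDiff_timePrimitive (n := 2) hu.contDiff).of_le one_le_two) t
  have hvc : HasCompactSupport fun x => timePrimitive u x t :=
    .intro (isCompact_closedBall 0 (R₀ + t)) fun x hx =>
      hu.timePrimitive_eq_zero_of_lt_norm ht (by simpa using hx)
  have hpoincare := setIntegral_sq_mul_gaussian_le hΩ hk hΩk hv hvc
    fun x hx => hu.timePrimitive_eq_zero_of_mem_frontier hx ht
  simp only [sq_fderiv_eq_sum_sq_dx] at hpoincare
  calc _ ≤ k / 4 * (4 / k * ∫ x in Ω, ∑ i, dx (timePrimitive u) i x t ^ 2) := by gcongr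
    _ = _ := by field_simp

theorem exists_neg_mul_le_setIntegral_primitiveDensity (hΩ : MeasurableSet Ω)
    (h0 : (0 : EuclideanSpace ℝ (Fin N)) ∉ closure Ω) (ha : ContinuousOn a (closure Ω))
    (R₀ : ℝ) :
    ∃ C ≥ 0, ∀ u, IsDampedWaveSolution 2 Ω a R₀ u → ∀ t ≥ (0 : ℝ),
      -(C * ∫ x in Ω, initialDensity u x) ≤ ∫ x in Ω, primitiveDensity a u x t := by
  obtain ⟨k, hk, hΩk⟩ := exists_pos_forall_le_mul_sq_norm h0 (N + 1)
  obtain ⟨C, hC, hf⟩ := exists_primitiveSource_sq_mul_exp_le ha hk.le R₀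
  refine ⟨4 / k * C, by positivity, fun u hu t ht => ?_⟩
  have hv := contDiff_timePrimitive (n := 2) hu.contDiff
  have hgrad_int : IntegrableOn (fun x => ∑ i, dx (timePrimitive u) i x t ^ 2) Ω :=
    integrableOn_of_eq_zero_of_lt_norm (R := R₀ + t) hΩ
      (continuous_finsetSum _ fun i _ => (contDiff_slice (contDiff_dx hv
        one_add_one_eq_two.le i) t).continuous.pow 2).continuousOn
      fun x _ hx => by simp [hu.dx_timePrimitive_eq_zero_of_lt_norm _ ht hx]
  have hgauss_int : IntegrableOn
      (fun x => k / 4 * (timePrimitive u x t ^ 2 * Real.exp (-k * ‖x‖ ^ 2))) Ω :=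
    integrableOn_of_eq_zero_of_lt_norm (R := R₀ + t) hΩ
      (continuous_const.mul (((contDiff_slice hv t).continuous.pow 2).mul
        (by fun_prop : Continuous fun x => Real.exp (-k * ‖x‖ ^ 2)))).continuousOn
      fun x _ hx => by simp [hu.timePrimitive_eq_zero_of_lt_norm ht hx]
  have hsub_int : IntegrableOn (fun x => ∑ i, dx (timePrimitive u) i x t ^ 2
      - k / 4 * (timePrimitive u x t ^ 2 * Real.exp (-k * ‖x‖ ^ 2))) Ω :=
    hgrad_int.sub hgauss_int
  have hdata_int := (hu.integrableOn_initialDensity hΩ).const_mul (4 / k * C)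
  have hmono : ∫ x in Ω, (∑ i, dx (timePrimitive u) i x t ^ 2
      - k / 4 * (timePrimitive u x t ^ 2 * Real.exp (-k * ‖x‖ ^ 2))
      - 4 / k * C * initialDensity u x) ≤ ∫ x in Ω, primitiveDensity a u x t :=
    setIntegral_mono_on (hsub_int.sub hdata_int)
      ((hu.isDensityWithFlux_primitiveDensity ha).integrableOn hΩ ht) hΩ
      fun x hx => le_primitiveDensity hk (hf u hu x hx) t
  rw [integral_sub hsub_int hdata_int, integral_sub hgrad_int hgauss_int, integral_const_mul,
    integral_const_mul] at hmono
  linarith [hu.setIntegral_sq_timePrimitive_mul_gaussian_le hΩ hk hΩk ht]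

lemma energyProduction_inv_mul_le {K a T u X S : ℝ} (hT : 0 < T) (hS : 0 ≤ S) (hKT : K ≤ 2 * T)
    (hKa : 3 ≤ K * a) (hTa : 1 ≤ T * a) :
    energyProduction K a (1 / T) u X S 0 0 0 0 * T ≤ 2 * (a * u ^ 2) := by
  have ha : 0 < a := pos_of_mul_pos_right (one_pos.trans_le hTa) hT.le
  have hcross : 2 * (u * X) ≤ a * u ^ 2 + T * X ^ 2 := by
    refine le_add_of_sq_le_four_mul (by positivity) (by positivity) ?_
    calc (2 * (u * X)) ^ 2 = 4 * (1 * (u ^ 2 * X ^ 2)) := by ring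
      _ ≤ 4 * (T * a * (u ^ 2 * X ^ 2)) := by gcongr
      _ = _ := by ring
  have hX : (2 * T + K + T) * X ^ 2 ≤ 2 * T * (K * a) * X ^ 2 := by
    gcongr
    linarith [mul_le_mul_of_nonneg_left hKa hT.le]
  have hSS : K * S ≤ 2 * T * S := by gcongr
  calc energyProduction K a (1 / T) u X S 0 0 0 0 * T
      = 2 * T * X ^ 2 - 2 * T * (K * a) * X ^ 2 - 2 * T * S + K * (X ^ 2 + S) + 2 * (u * X)
          + a * u ^ 2 := by
        rw [energyProduction]
        field_simp
        ring
    _ ≤ 2 * (a * u ^ 2) := by linarith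

namespace IsDampedWaveSolution

lemma energyDensityDeriv_add_primitiveDensityDeriv_le (hu : IsDampedWaveSolution 2 Ω a R₀ u)
    (ht₀ : 0 < t₀) (hKt : K ≤ 2 * t₀) {x : EuclideanSpace ℝ (Fin N)} (hx : x ∈ Ω)
    (hKa : 3 ≤ K * a x) (hta : 1 ≤ t₀ * a x) {t : ℝ} (ht : 0 < t) :
    energyDensityDeriv a u (fun _ => 0) K 1 t₀ x t + primitiveDensityDeriv a u x t ≤
      ∑ i, dx (fun y s => energyFlux u (fun _ => 0) K 1 t₀ i y s + primitiveFlux u i y s)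
        i x t := by
  have hB : ContDiff ℝ 2 (fun _ : EuclideanSpace ℝ (Fin N) => (0 : ℝ)) := contDiff_const
  have hflux (i : Fin N) :
      dx (fun y s => energyFlux u (fun _ => 0) K 1 t₀ i y s + primitiveFlux u i y s) i x t =
        dx (energyFlux u (fun _ => 0) K 1 t₀ i) i x t + dx (primitiveFlux u i) i x t := by
    simp only [dx]
    rw [fderiv_fun_add ((contDiff_energyFlux hu.contDiff hB i t).differentiable one_ne_zero x)
      ((contDiff_primitiveFlux hu.contDiff i t).differentiable one_ne_zero x),
      add_apply]
  have hax : 0 < a x := pos_of_mul_pos_right (one_pos.trans_le hta) ht₀.le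
  have henergy : energyDensityDeriv a u (fun _ => 0) K 1 t₀ x t
      - ∑ i, dx (energyFlux u (fun _ => 0) K 1 t₀ i) i x t ≤ 2 * (a x * u x t ^ 2) :=
    calc _ = energyProduction K (a x) (1 / (t₀ + t)) (u x t) (dt u x t) (∑ i, dx u i x t ^ 2)
            0 0 0 0 * (t₀ + t) := by
          rw [energyDensityDeriv_sub_sum_dx_energyFlux hu hB hx ht]
          simp [expWeight, lap]
      _ ≤ _ := energyProduction_inv_mul_le (by linarith) (by positivity) (by linarith) hKa
          (hta.trans (by gcongr; linarith))
  simp only [hflux, Finset.sum_add_distrib]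
  linarith [hu.primitiveDensityDeriv_sub_sum_dx_primitiveFlux hx ht.le]

lemma setIntegral_energyDensity_add_primitiveDensity_le (hu : IsDampedWaveSolution 2 Ω a R₀ u)
    (hΩ : MeasurableSet Ω) (ha : ContinuousOn a (closure Ω)) (ht₀ : 0 < t₀) (hKt : K ≤ 2 * t₀)
    (hKa : ∀ x ∈ Ω, 3 ≤ K * a x) (hta : ∀ x ∈ Ω, 1 ≤ t₀ * a x) {t : ℝ} (ht : 0 ≤ t) :
    (∫ x in Ω, energyDensity a u (fun _ => 0) K 1 t₀ x t) + ∫ x in Ω, primitiveDensity a u x t ≤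
      (∫ x in Ω, energyDensity a u (fun _ => 0) K 1 t₀ x 0) + ∫ x in Ω, u x 0 ^ 2 := by
  have hE := hu.isDensityWithFlux_energyDensity (K := K) (lam := 1) ha
    (contDiff_const (c := (0 : ℝ))) ht₀
  have hP := hu.isDensityWithFlux_primitiveDensity ha
  have hmono := (hE.add hP).setIntegral_le_initial hΩ (fun x hx s hs =>
    hu.energyDensityDeriv_add_primitiveDensityDeriv_le ht₀ hKt hx (hKa x hx) (hta x hx) hs) ht
  rw [integral_add (hE.integrableOn hΩ ht) (hP.integrableOn hΩ ht),
    integral_add (hE.integrableOn hΩ le_rfl) (hP.integrableOn hΩ le_rfl)] at hmono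
  simpa only [primitiveDensity_zero] using hmono

lemma setIntegral_sq_initial_le (hu : IsDampedWaveSolution 2 Ω a R₀ u) (hΩ : MeasurableSet Ω) :
    ∫ x in Ω, u x 0 ^ 2 ≤ ∫ x in Ω, initialDensity u x :=
  integral_mono (hu.integrableOn_sq_initial hΩ) (hu.integrableOn_initialDensity hΩ) fun x => by
    simp only [initialDensity, add_assoc]
    exact le_add_of_nonneg_right (by positivity)

end IsDampedWaveSolution

theorem exists_one_add_mul_setIntegral_le (hΩ : MeasurableSet Ω)
    (h0 : (0 : EuclideanSpace ℝ (Fin N)) ∉ closure Ω) (ha : ContinuousOn a (closure Ω)) {r : ℝ}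
    (hr : 0 < r) (hra : ∀ x ∈ Ω, r ≤ a x) (R₀ : ℝ) :
    ∃ C ≥ 0, ∀ u, IsDampedWaveSolution 2 Ω a R₀ u → ∀ t ≥ (0 : ℝ),
      (1 + t) ^ (1 : ℝ) * ∫ x in Ω, a x * u x t ^ 2 ≤ C * ∫ x in Ω, initialDensity u x := by
  have hK : 0 ≤ 3 / r := by positivity
  have hKr : 3 / r * r = 3 := div_mul_cancel₀ 3 hr.ne'
  have hKa : ∀ x ∈ Ω, 3 ≤ 3 / r * a x := fun x hx =>
    hKr.ge.trans (mul_le_mul_of_nonneg_left (hra x hx) hK)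
  have ht₀ : 1 ≤ 1 + 3 / r := by linarith
  have hB : ContDiff ℝ 2 (fun _ : EuclideanSpace ℝ (Fin N) => (0 : ℝ)) := contDiff_const
  obtain ⟨C₁, hC₁, henergy⟩ := exists_setIntegral_energyDensity_zero_le hΩ ha hB hK
    (one_pos.trans_le ht₀) 1 R₀
  obtain ⟨C₂, hC₂, hprimitive⟩ := exists_neg_mul_le_setIntegral_primitiveDensity hΩ h0 ha R₀
  refine ⟨2 * (C₁ + 1 + C₂), by positivity, fun u hu t ht => ?_⟩
  have hlower := hu.rpow_mul_setIntegral_le_setIntegral_energyDensity (K := 3 / r) hΩ ha hB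
    (fun _ _ => le_rfl) hr hra (by linarith) ht₀ zero_le_one ht
  have hmono := hu.setIntegral_energyDensity_add_primitiveDensity_le hΩ ha
    (one_pos.trans_le ht₀) (by linarith) hKa
    (fun x hx => by linarith [hKa x hx, hr.trans_le (hra x hx)]) ht
  linarith [henergy u hu, hprimitive u hu t ht, hu.setIntegral_sq_initial_le hΩ]

end EndpointDecay

lemma sqrt_le_of_rpow_mul_le {I D C t s r : ℝ} (ht : 0 ≤ t) (hC : 0 ≤ C) (hr : -s / 2 ≤ r)
    (h : (1 + t) ^ s * I ≤ C * D) : √I ≤ √C * (1 + t) ^ r * √D := by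
  have hT : 0 < 1 + t := by linarith
  have hinv : ((1 + t) ^ (-s / 2)) ^ 2 * (1 + t) ^ s = 1 := by
    rw [← Real.rpow_natCast, ← Real.rpow_mul hT.le, ← Real.rpow_add hT]
    norm_num
  calc √I = √(((1 + t) ^ (-s / 2)) ^ 2 * ((1 + t) ^ s * I)) := by
        rw [← mul_assoc, hinv, one_mul]
    _ ≤ √(((1 + t) ^ (-s / 2)) ^ 2 * (C * D)) := by gcongr
    _ = √C * (1 + t) ^ (-s / 2) * √D := by
        rw [Real.sqrt_mul (sq_nonneg _), Real.sqrt_sq (by positivity), Real.sqrt_mul hC]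
        ring
    _ ≤ √C * (1 + t) ^ r * √D := by
        gcongr
        linarith

lemma exists_pos_sqrt_setIntegral_le {N : ℕ} {Ω : Set (EuclideanSpace ℝ (Fin N))}
    {a : EuclideanSpace ℝ (Fin N) → ℝ} {R₀ s r : ℝ} (hΩ : MeasurableSet Ω) (hr : -s / 2 ≤ r)
    (h : ∃ C ≥ 0, ∀ u, IsDampedWaveSolution 2 Ω a R₀ u → ∀ t ≥ (0 : ℝ),
      (1 + t) ^ s * ∫ x in Ω, a x * u x t ^ 2 ≤ C * ∫ x in Ω, initialDensity u x) :
    ∃ C > 0, ∀ u, IsDampedWaveSolution 2 Ω a R₀ u → ∀ t ≥ (0 : ℝ),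
      √(∫ x in Ω, a x * u x t ^ 2) ≤ C * (1 + t) ^ r *
        √(sobNormSq 1 Ω (fun x => u x 0) + sobNormSq 0 Ω (fun x => deriv (u x) 0)) := by
  obtain ⟨C, hC, hdecay⟩ := h
  refine ⟨√C + 1, by positivity, fun u hu t ht => ?_⟩
  refine (sqrt_le_of_rpow_mul_le ht hC hr (hdecay u hu t ht)).trans ?_
  rw [hu.setIntegral_initialDensity hΩ]
  have : 0 ≤ 1 + t := by linarith
  gcongr
  linarith

theorem stmt_18_general {N : ℕ} (hN : 0 < N) {α : ℝ} (hα : 0 < α)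
    {Ω : Set (EuclideanSpace ℝ (Fin N))} (hΩ : MeasurableSet Ω)
    {a : EuclideanSpace ℝ (Fin N) → ℝ} (ha : ContinuousOn a (closure Ω))
    (hapos : ∀ x ∈ closure Ω, 0 < a x) {a₀ : ℝ} (ha₀ : 0 < a₀)
    (halim : Tendsto (fun x : EuclideanSpace ℝ (Fin N) => ‖x‖ ^ (-α) * a x) (cocompact _)
      (nhds a₀)) (R₀ : ℝ) :
    (∀ δ > (0 : ℝ), ∃ C > (0 : ℝ), ∀ u, IsDampedWaveSolution 2 Ω a R₀ u → ∀ t ≥ (0 : ℝ),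
      √(∫ x in Ω, a x * u x t ^ 2) ≤ C * (1 + t) ^ (-((N + α) / (2 * (2 + α))) + δ) *
        √(sobNormSq 1 Ω (fun x => u x 0) + sobNormSq 0 Ω (fun x => deriv (u x) 0)))
    ∧ (0 ∉ closure Ω → ∃ C > (0 : ℝ), ∀ u, IsDampedWaveSolution 2 Ω a R₀ u → ∀ t ≥ (0 : ℝ),
      √(∫ x in Ω, a x * u x t ^ 2) ≤ C * (1 + t) ^ (-(1 / 2) : ℝ) *
        √(sobNormSq 1 Ω (fun x => u x 0) + sobNormSq 0 Ω (fun x => deriv (u x) 0))) := by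
  refine ⟨fun δ hδ => ?_, fun h0 => ?_⟩
  · set μ : ℝ := (N + α) / (2 + α) with hμ
    have hμ₀ : 0 < μ := by positivity
    have hexp : (N + α) / (2 * (2 + α)) = μ / 2 := by rw [hμ, div_div, mul_comm 2]
    refine exists_pos_sqrt_setIntegral_le hΩ ?_ (exists_rpow_mul_setIntegral_le hα hN hΩ ha
      hapos ha₀ halim (le_max_left 0 (μ - 2 * δ)) (max_lt hμ₀ (by linarith)) R₀)
    linarith [le_max_right 0 (μ - 2 * δ)]
  · obtain ⟨r, hr, hra⟩ := exists_pos_le hα ha hapos ha₀ halim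
    exact exists_pos_sqrt_setIntegral_le hΩ (by norm_num) (exists_one_add_mul_setIntegral_le hΩ
      h0 ha hr (fun x hx => hra x (subset_closure hx)) R₀)

/-- Corollary 1.2 of the paper: for every `δ > 0` and `R₀ > 0` there is
`C > 0` such that every classical `C³` solution of the damped wave equation with finite
propagation from `B(0,R₀)` and finite `H²×H¹` data norm satisfies, for `t ≥ 0`,
`(∫_Ω a|u(·,t)|² dx)^{1/2} ≤ C (1+t)^{−(N+α)/(2(2+α))+δ} ‖(u(0),u_t(0))‖_{H²×H¹}`;
when `N = 2` the estimate also holds with `δ = 0`. -/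
theorem stmt_18 (N : ℕ) (hN : 2 ≤ N) (α : ℝ) (hα : 0 < α)
    (Ω : Set (EuclideanSpace ℝ (Fin N))) (hΩopen : IsOpen Ω)
    (hΩext : IsCompact Ωᶜ) (hΩbdry : HasSmoothBoundary Ω)
    (h0 : (0 : EuclideanSpace ℝ (Fin N)) ∉ closure Ω)
    (a : EuclideanSpace ℝ (Fin N) → ℝ) (ha : ContDiffOn ℝ 2 a (closure Ω))
    (hapos : ∀ x ∈ closure Ω, 0 < a x)
    (a₀ : ℝ) (ha₀ : 0 < a₀)
    (halim : Tendsto (fun x : EuclideanSpace ℝ (Fin N) => ‖x‖ ^ (-α) * a x)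
      (cocompact (EuclideanSpace ℝ (Fin N))) (nhds a₀)) :
    (∀ δ > (0 : ℝ), ∀ R₀ > (0 : ℝ), ∃ C > (0 : ℝ),
      ∀ u : EuclideanSpace ℝ (Fin N) → ℝ → ℝ,
        IsDampedWaveSolution 3 Ω a R₀ u →
        (∀ j ∈ Finset.range 3,
          IntegrableOn (fun x => ‖iteratedFDeriv ℝ j (fun y => u y 0) x‖ ^ 2) Ω) →
        (∀ j ∈ Finset.range 2,
          IntegrableOn (fun x => ‖iteratedFDeriv ℝ j (fun y => deriv (u y) 0) x‖ ^ 2) Ω) →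
        ∀ t ≥ (0 : ℝ),
          Real.sqrt (∫ x in Ω, a x * (u x t) ^ 2)
            ≤ C * (1 + t) ^ (-(((N : ℝ) + α) / (2 * (2 + α))) + δ)
              * Real.sqrt (sobNormSq 2 Ω (fun x => u x 0)
                  + sobNormSq 1 Ω (fun x => deriv (u x) 0)))
    ∧ (N = 2 → ∀ R₀ > (0 : ℝ), ∃ C > (0 : ℝ),
      ∀ u : EuclideanSpace ℝ (Fin N) → ℝ → ℝ,
        IsDampedWaveSolution 3 Ω a R₀ u →
        (∀ j ∈ Finset.range 3,
          IntegrableOn (fun x => ‖iteratedFDeriv ℝ j (fun y => u y 0) x‖ ^ 2) Ω) →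
        (∀ j ∈ Finset.range 2,
          IntegrableOn (fun x => ‖iteratedFDeriv ℝ j (fun y => deriv (u y) 0) x‖ ^ 2) Ω) →
        ∀ t ≥ (0 : ℝ),
          Real.sqrt (∫ x in Ω, a x * (u x t) ^ 2)
            ≤ C * (1 + t) ^ (-(((N : ℝ) + α) / (2 * (2 + α))))
              * Real.sqrt (sobNormSq 2 Ω (fun x => u x 0)
                  + sobNormSq 1 Ω (fun x => deriv (u x) 0))) := by
  have hdecay := stmt_18_general (two_pos.trans_le hN) hα hΩopen.measurableSet ha.continuousOn
    hapos ha₀ halim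
  refine ⟨fun δ hδ R₀ _ => ?_, fun hN2 R₀ _ => ?_⟩
  · obtain ⟨C, hC, hu⟩ := (hdecay R₀).1 δ hδ
    refine ⟨C, hC, fun u hsol _ _ t ht => (hu u (hsol.of_le (by norm_num)) t ht).trans ?_⟩
    gcongr <;> exact sobNormSq_mono (by norm_num) _
  · obtain ⟨C, hC, hu⟩ := (hdecay R₀).2 h0
    have hexp : (N + α) / (2 * (2 + α)) = 1 / 2 := by
      rw [hN2]
      field_simp
      norm_num
    refine ⟨C, hC, fun u hsol _ _ t ht => (hu u (hsol.of_le (by norm_num)) t ht).trans ?_⟩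
    rw [hexp]
    gcongr <;> exact sobNormSq_mono (by norm_num) _
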